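/- Let k be an algebraically closed field of characteristic 0 and let F ∈ k[x_0,x_1,x_2,x_3] be an irreducible homogeneous polynomial of degree d ≥ 4 defining the integral surface X = {F = 0} ⊂ P^3, and suppose that only finitely many 2-dimensional k-linear subspaces of k^4 are contained in {x ∈ k^4 : F(x) = 0} (only finitely many lines lie on X). Then there exists a nonzero P ∈ k^4 with F(P) = 0 such that: (1) some partial derivative ∂F/∂x_i does not vanish at P; (2) P lies in no 3-dimensional k-linear subspace of k^4 on which F vanishes identically, and for every 3-dimensional k-linear subspace Π of k^4 containing P, the order of vanishing at P of the restriction of F to Π is at most 2; (3) P lies in no 2-dimensional k-linear subspace of k^4 on which F vanishes identically; (4) for every 3-dimensional k-linear subspace Π of k^4 containing P and every cubic form c on Π dividing the restriction of F to Π with c(P) = 0, the point P is a non-singular point of the plane cubic {c = 0}, i.e. the gradient of c does not vanish at P. -/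

import Mathlib

open MvPolynomial

/-- The composite `G ∘ ψ` of a polynomial `G` in `m` variables with a linear map
`ψ : k^n → k^m`, as a polynomial in `n` variables. -/
noncomputable def restrictPoly {k : Type*} [CommSemiring k] {m n : ℕ}
    (G : MvPolynomial (Fin m) k) (ψ : (Fin n → k) →ₗ[k] (Fin m → k)) :
    MvPolynomial (Fin n) k :=
  aeval (fun i => ∑ j, C (ψ (Pi.single j 1) i) * X j) G

/-!
Let `P` be a generic point of the surface, with affine coordinates `(x 0, x 1, z)` in an
algebraically closed extension of `k`, and let `D i` be the partial derivatives with respect to the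
`x i`. The section of the surface by its tangent plane at `P`, written in coordinates centred at
`P`, is a plane curve `p` that is singular at the origin and whose second derivatives there are
`-∂F/∂z (P)` times the Hessian `D i (D j z)`.

If the Hessian is degenerate, flowing along its kernel shows that `P` lies on a line on the surface.
When there are only finitely many lines, a generic point lies on none, so the Hessian is invertible
and `p` has a double point. Suppose that a factor `c` of `p` of degree less than `deg F` is singular
at the origin. The derivations `D i - ∂/∂X i` compare `c` with the corresponding factor at a nearby
point: up to a flat twist by scalars, each maps `c` to a multiple of the linear form with
coefficients in the `i`-th row of the Hessian, the factor being the same for both `i`. Iterating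
gives a sequence of polynomials of decreasing degree starting with `c`: the coefficients of a Taylor
expansion in powers of the equation of the tangent plane, whose sum does not depend on `P` up to a
scalar. So that sum is defined over `k`; it vanishes at `P` and has degree less than `deg F`, which
is impossible at a generic point.

The properties of `P` obtained in this way specialize to a point over `k` by the Nullstellensatz,
and a plane section singular at a smooth point is the tangent section there.
-/

section CoefficientwiseDerivation

variable {k K σ : Type*} [CommRing k] [CommRing K] [Algebra k K]

theorem derivation_aeval [Fintype σ] (D : Derivation k K K) (x : σ → K) (F : MvPolynomial σ k) :
    D (aeval x F) = ∑ i, aeval x (pderiv i F) * D (x i) := by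
  classical
  induction F using MvPolynomial.induction_on with
  | C a => simp
  | add p q hp hq => simp [hp, hq, add_mul, Finset.sum_add_distrib]
  | mul_X p i hp =>
    simp only [map_mul, aeval_X, Derivation.leibniz, hp, smul_eq_mul, map_add, pderiv_X, add_mul,
      Finset.sum_add_distrib, Finset.mul_sum, Pi.single_apply, apply_ite (aeval x), map_zero,
      mul_ite, mul_one, mul_zero, ite_mul, zero_mul, Finset.sum_ite_eq, Finset.mem_univ, if_true]
    exact congrArg _ (Finset.sum_congr rfl fun j _ => by ring)

theorem pderiv_pderiv_comm (i j : σ) (p : MvPolynomial σ K) :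
    pderiv i (pderiv j p) = pderiv j (pderiv i p) := by
  classical
  have h : ⁅pderiv (R := K) i, pderiv (R := K) j⁆ = 0 := by
    ext l
    simp [Derivation.commutator_apply, pderiv_X, Pi.single_apply, apply_ite]
  rw [← sub_eq_zero, ← Derivation.commutator_apply, h, Derivation.zero_apply]

theorem totalDegree_pderiv_le (i : σ) (p : MvPolynomial σ K) :
    (pderiv i p).totalDegree ≤ p.totalDegree := by
  refine Finset.sup_le fun m hm => ?_
  have hmem : m + Finsupp.single i 1 ∈ p.support := by
    rw [mem_support_iff, coeff_pderiv] at hm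
    exact mem_support_iff.mpr (left_ne_zero_of_mul hm)
  refine le_trans ?_ (le_totalDegree hmem)
  classical
  simp [Finsupp.sum_add_index']

/-- The derivation `D` of the coefficient ring, extended to polynomials by annihilating the
variables. -/
noncomputable def coeffDeriv (D : Derivation k K K) :
    Derivation k (MvPolynomial σ K) (MvPolynomial σ K) where
  toFun p := AddMonoidAlgebra.map (D : K →+ K) p
  map_add' p q := by
    ext m
    exact D.map_add _ _
  map_smul' a p := by
    ext m
    exact D.map_smul _ _
  map_one_eq_zero' := by
    classical
    ext m
    change D (coeff m 1) = 0
    simp [MvPolynomial.coeff_one, apply_ite]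
  leibniz' p q := by
    classical
    ext m
    change D (coeff m (p * q)) = coeff m (p * _ + q * _)
    simp only [coeff_mul, coeff_add, map_sum, Derivation.leibniz, Finset.sum_add_distrib,
      smul_eq_mul]
    exact congrArg _ (Finsupp.sum_antidiagonal_swap m fun x y => coeff y q * D (coeff x p))

@[simp]
theorem coeff_coeffDeriv (D : Derivation k K K) (p : MvPolynomial σ K) (m : σ →₀ ℕ) :
    coeff m (coeffDeriv D p) = D (coeff m p) := rfl

@[simp]
theorem coeffDeriv_C (D : Derivation k K K) (a : K) :
    coeffDeriv D (C a : MvPolynomial σ K) = C (D a) := by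
  classical
  ext m
  simp only [coeff_coeffDeriv, coeff_C, apply_ite D, map_zero]

@[simp]
theorem coeffDeriv_X (D : Derivation k K K) (i : σ) :
    coeffDeriv D (X i : MvPolynomial σ K) = 0 := by
  classical
  ext m
  simp [coeff_X, apply_ite D]

theorem coeffDeriv_pderiv (D : Derivation k K K) (i : σ) (p : MvPolynomial σ K) :
    coeffDeriv D (pderiv i p) = pderiv i (coeffDeriv D p) := by
  ext m
  simp [coeff_pderiv, Derivation.leibniz, mul_comm]

theorem totalDegree_coeffDeriv_le (D : Derivation k K K) (p : MvPolynomial σ K) :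
    (coeffDeriv D p).totalDegree ≤ p.totalDegree := by
  refine Finset.sup_mono fun m hm => ?_
  rw [mem_support_iff, coeff_coeffDeriv] at hm
  exact mem_support_iff.mpr fun h => hm (by rw [h, map_zero])

end CoefficientwiseDerivation

section ComovingDerivation

variable {k K σ : Type*} [CommRing k] [CommRing K] [Algebra k K]

/-- The derivation `D i - ∂ / ∂ X i` of `K[X]`. If the `D i` are the partial derivatives of a field
of functions of a point `x`, it differentiates a family of polynomials in the moving coordinates
`X = Y - x` while the fixed coordinates `Y` are held constant. -/
noncomputable def comovingDeriv (D : σ → Derivation k K K) (i : σ) :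
    Derivation k (MvPolynomial σ K) (MvPolynomial σ K) :=
  coeffDeriv (D i) - (pderiv i).restrictScalars k

variable (D : σ → Derivation k K K) (i j : σ) (p : MvPolynomial σ K)

theorem comovingDeriv_apply : comovingDeriv D i p = coeffDeriv (D i) p - pderiv i p := rfl

theorem comovingDeriv_C (a : K) : comovingDeriv D i (C a) = C (D i a) := by
  simp [comovingDeriv_apply]

theorem constantCoeff_comovingDeriv :
    constantCoeff (comovingDeriv D i p) = D i (constantCoeff p) - constantCoeff (pderiv i p) := by
  simp only [comovingDeriv_apply, map_sub, constantCoeff_eq, coeff_coeffDeriv]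

theorem pderiv_comovingDeriv :
    pderiv j (comovingDeriv D i p) = comovingDeriv D i (pderiv j p) := by
  simp only [comovingDeriv_apply, map_sub, coeffDeriv_pderiv, pderiv_pderiv_comm i j]

theorem comovingDeriv_comm (hD : ∀ a, D i (D j a) = D j (D i a)) :
    comovingDeriv D i (comovingDeriv D j p) = comovingDeriv D j (comovingDeriv D i p) := by
  have h : coeffDeriv (D i) (coeffDeriv (D j) p) = coeffDeriv (D j) (coeffDeriv (D i) p) := by
    ext m
    exact hD _
  simp only [comovingDeriv_apply, map_sub, coeffDeriv_pderiv, h, pderiv_pderiv_comm i j]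
  ring

theorem totalDegree_comovingDeriv_le : (comovingDeriv D i p).totalDegree ≤ p.totalDegree :=
  (totalDegree_sub _ _).trans
    (max_le (totalDegree_coeffDeriv_le _ _) (totalDegree_pderiv_le _ _))

end ComovingDerivation

section Jets

variable {K σ : Type*} [CommRing K]

theorem constantCoeff_pderiv_mul (i : σ) (p q : MvPolynomial σ K) :
    constantCoeff (pderiv i (p * q)) =
      constantCoeff p * constantCoeff (pderiv i q) +
        constantCoeff q * constantCoeff (pderiv i p) := by
  simp only [Derivation.leibniz, smul_eq_mul, map_add, map_mul]

theorem constantCoeff_pderiv_pderiv_mul (i j : σ) (p q : MvPolynomial σ K) :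
    constantCoeff (pderiv i (pderiv j (p * q))) =
      constantCoeff p * constantCoeff (pderiv i (pderiv j q)) +
      constantCoeff (pderiv j q) * constantCoeff (pderiv i p) +
      (constantCoeff q * constantCoeff (pderiv i (pderiv j p)) +
        constantCoeff (pderiv j p) * constantCoeff (pderiv i q)) := by
  simp only [Derivation.leibniz, smul_eq_mul, map_add, map_mul]

/-- A polynomial whose zero locus is singular at the origin: it has neither constant nor linear
terms. -/
def SingularAtOrigin (p : MvPolynomial σ K) : Prop :=
  constantCoeff p = 0 ∧ ∀ i, constantCoeff (pderiv i p) = 0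

theorem SingularAtOrigin.mul_right {p : MvPolynomial σ K} (hp : SingularAtOrigin p)
    (q : MvPolynomial σ K) : SingularAtOrigin (p * q) :=
  ⟨by simp [hp.1], fun i => by simp [hp.1, hp.2]⟩

theorem SingularAtOrigin.constantCoeff_pderiv_pderiv_mul {p : MvPolynomial σ K}
    (hp : SingularAtOrigin p) (i j : σ) (q : MvPolynomial σ K) :
    constantCoeff (pderiv i (pderiv j (p * q))) =
      constantCoeff (pderiv i (pderiv j p)) * constantCoeff q := by
  rw [_root_.constantCoeff_pderiv_pderiv_mul, hp.1, hp.2, hp.2]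
  ring

end Jets

section LinearForm

/-- The linear form `∑ i, a i * X i`. -/
noncomputable def linForm {K σ : Type*} [CommSemiring K] [Fintype σ] (a : σ → K) :
    MvPolynomial σ K :=
  ∑ i, C (a i) * X i

variable {K σ : Type*} [Fintype σ]

section CommRing

variable [CommRing K] (a : σ → K)

@[simp]
theorem constantCoeff_linForm : constantCoeff (linForm a) = 0 := by simp [linForm]

@[simp]
theorem pderiv_linForm (i : σ) : pderiv i (linForm a) = C (a i) := by
  classical
  simp [linForm, pderiv_X, Pi.single_apply]

theorem aeval_linForm (x : σ → K) : aeval x (linForm a) = a ⬝ᵥ x := by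
  simp [linForm, dotProduct]

theorem isHomogeneous_linForm : (linForm a).IsHomogeneous 1 :=
  IsHomogeneous.sum _ _ _ fun i _ => isHomogeneous_C_mul_X (a i) i

theorem comovingDeriv_linForm {k : Type*} [CommRing k] [Algebra k K] (D : σ → Derivation k K K)
    (i : σ) : comovingDeriv D i (linForm a) = linForm (fun j => D i (a j)) - C (a i) := by
  rw [comovingDeriv_apply, pderiv_linForm]
  simp [linForm, mul_comm]

theorem linForm_eq_zero_iff : linForm a = 0 ↔ a = 0 := by
  refine ⟨fun h => funext fun i => C_injective σ K ?_, fun h => by simp [h, linForm]⟩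
  rw [← pderiv_linForm, h, map_zero, Pi.zero_apply, C_0]

theorem eq_linForm_of_totalDegree_le_one {p : MvPolynomial σ K} (hdeg : p.totalDegree ≤ 1)
    (h0 : constantCoeff p = 0) : p = linForm fun i => constantCoeff (pderiv i p) := by
  classical
  ext m
  simp only [linForm, coeff_sum, coeff_C_mul, coeff_X, constantCoeff_eq, coeff_pderiv]
  rcases Nat.lt_or_ge 1 m.degree with hm | hm
  · rw [coeff_eq_zero_of_totalDegree_lt (hdeg.trans_lt hm)]
    refine (Finset.sum_eq_zero fun i _ => ?_).symm
    rw [if_neg (by rintro rfl; simp at hm), mul_zero]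
  rcases Nat.le_one_iff_eq_zero_or_eq_one.mp hm with hm | hm
  · obtain rfl := m.degree_eq_zero_iff.mp hm
    simpa [constantCoeff_eq] using h0
  · obtain ⟨i, rfl⟩ := (Finsupp.sum_eq_one_iff m).mp hm
    simp [Finsupp.single_left_inj]

end CommRing

variable [Field K] {a b : σ → K}

theorem totalDegree_linForm (ha : a ≠ 0) : (linForm a).totalDegree = 1 :=
  (isHomogeneous_linForm a).totalDegree ((linForm_eq_zero_iff a).not.mpr ha)

theorem irreducible_linForm (ha : a ≠ 0) : Irreducible (linForm a) := by
  refine irreducible_of_totalDegree_eq_one (totalDegree_linForm ha) fun r hr => ?_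
  obtain ⟨i, hi⟩ := Function.ne_iff.mp ha
  have h : r ∣ a i := by
    have hcoeff := congrArg (coeff 0) (pderiv_linForm a i)
    rw [coeff_pderiv] at hcoeff
    have hai : coeff (Finsupp.single i 1) (linForm a) = a i := by simpa using hcoeff
    exact hai ▸ hr (Finsupp.single i 1)
  exact isUnit_iff_ne_zero.mpr fun h0 => hi (by rwa [h0, zero_dvd_iff] at h)

theorem exists_mul_linForm_of_mul_eq (ha : a ≠ 0) (hab : ∀ r : K, b ≠ r • a)
    {p q : MvPolynomial σ K} (h : p * linForm b = q * linForm a) :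
    ∃ B, p = B * linForm a ∧ q = B * linForm b := by
  have hprime : Prime (linForm a) := (irreducible_linForm ha).prime
  have hndvd : ¬ linForm a ∣ linForm b := by
    rintro ⟨r, hr⟩
    refine hab (constantCoeff r) (funext fun i => ?_)
    simpa [constantCoeff_pderiv_mul] using congrArg (fun p => constantCoeff (pderiv i p)) hr
  obtain ⟨B, rfl⟩ := (hprime.dvd_or_dvd (h ▸ Dvd.intro_left q rfl)).resolve_right hndvd
  refine ⟨B, mul_comm _ _, mul_right_cancel₀ hprime.ne_zero ?_⟩
  rw [← h]
  ring

end LinearForm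

section Hessian

variable {k K σ : Type*} [CommRing k] [CommRing K] [Algebra k K]
  (D : σ → Derivation k K K) (z : K)

/-- The Hessian matrix of `z` with respect to the derivations `D i`. -/
def hessian : Matrix σ σ K := .of fun i j => D i (D j z)

variable {D}

theorem hessian_symm (hD : ∀ i j a, D i (D j a) = D j (D i a)) (i j : σ) :
    hessian D z i j = hessian D z j i := hD i j z

theorem derivation_hessian_comm (hD : ∀ i j a, D i (D j a) = D j (D i a)) (i j l : σ) :
    D i (hessian D z j l) = D j (hessian D z i l) := hD i j _

theorem comovingDeriv_linForm_hessian_comm [Fintype σ]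
    (hD : ∀ i j a, D i (D j a) = D j (D i a)) (i j : σ) :
    comovingDeriv D i (linForm (hessian D z j)) = comovingDeriv D j (linForm (hessian D z i)) := by
  simp only [comovingDeriv_linForm, hessian_symm z hD j i, derivation_hessian_comm z hD i j]

theorem constantCoeff_pderiv_pderiv_eq_neg_hessian [Fintype σ] {p h : MvPolynomial σ K}
    (hph : ∀ i, comovingDeriv D i p = h * linForm (hessian D z i)) (hp : SingularAtOrigin p)
    (i j : σ) :
    constantCoeff (pderiv i (pderiv j p)) = -(constantCoeff h * hessian D z i j) := by
  have hjet := congrArg (fun q => constantCoeff (pderiv j q)) (hph i)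
  simp only [pderiv_comovingDeriv, constantCoeff_comovingDeriv, constantCoeff_pderiv_mul, hp.2,
    map_zero, pderiv_linForm, constantCoeff_linForm, constantCoeff_C] at hjet
  linear_combination -hjet

end Hessian

section SingularFactor

variable {k K σ : Type*} [CommRing k] [Field K] [Algebra k K]

theorem isRelPrime_of_minimal_singularAtOrigin {c g : MvPolynomial σ K} (hc : c ≠ 0)
    (hsing : SingularAtOrigin c) (hg : constantCoeff g ≠ 0)
    (hmin : ∀ c', c' ∣ c → SingularAtOrigin c' → c.totalDegree ≤ c'.totalDegree) :
    IsRelPrime c g := by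
  rintro e ⟨c', rfl⟩ ⟨g', rfl⟩
  obtain ⟨he0, hc'0⟩ := mul_ne_zero_iff.mp hc
  have he : constantCoeff e ≠ 0 := fun h => hg (by simp [h])
  have hval : constantCoeff c' = 0 := by simpa [he] using hsing.1
  have hc' : SingularAtOrigin c' := by
    refine ⟨hval, fun i => ?_⟩
    simpa [constantCoeff_pderiv_mul, hval, he] using hsing.2 i
  have hdeg := hmin c' (dvd_mul_left _ _) hc'
  rw [totalDegree_mul_of_isDomain he0 hc'0] at hdeg
  rw [totalDegree_eq_zero_iff_eq_C.mp (by omega : e.totalDegree = 0), ← constantCoeff_eq]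
  exact he.isUnit.map C

theorem exists_minimal_singular_factor {p c₀ : MvPolynomial σ K} (hc₀ : c₀ ∣ p)
    (hsing : SingularAtOrigin c₀) :
    ∃ c g, c * g = p ∧ SingularAtOrigin c ∧ c.totalDegree ≤ c₀.totalDegree ∧
      ∀ c', c' ∣ c → SingularAtOrigin c' → c.totalDegree ≤ c'.totalDegree := by
  obtain ⟨c, ⟨hcp, hc⟩, hmin⟩ := exists_minimalFor_of_wellFoundedLT
    (fun c => c ∣ p ∧ SingularAtOrigin c) totalDegree ⟨c₀, hc₀, hsing⟩
  have hle : ∀ c', c' ∣ p → SingularAtOrigin c' → c.totalDegree ≤ c'.totalDegree :=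
    fun c' hdvd hs => (le_total _ _).elim id fun h => hmin ⟨hdvd, hs⟩ h
  obtain ⟨g, hg⟩ := hcp
  exact ⟨c, g, hg.symm, hc, hle c₀ hc₀ hsing, fun c' hdvd => hle c' (hdvd.trans ⟨g, hg⟩)⟩

variable {D : σ → Derivation k K K} {z : K} [Fintype σ]

theorem exists_factor_with_hessian {p h c₀ : MvPolynomial σ K}
    (hph : ∀ i, comovingDeriv D i p = h * linForm (hessian D z i)) (hh : constantCoeff h ≠ 0)
    (hz : hessian D z ≠ 0) (hc₀ : c₀ ∣ p) (hsing : SingularAtOrigin c₀) :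
    ∃ c g, c * g = p ∧ SingularAtOrigin c ∧ c.totalDegree ≤ c₀.totalDegree ∧ IsRelPrime c g ∧
      ∀ i j, constantCoeff (pderiv i (pderiv j c)) = hessian D z i j := by
  obtain ⟨c, g, rfl, hc, hdeg, hmin⟩ := exists_minimal_singular_factor hc₀ hsing
  have hprod (i j) : constantCoeff (pderiv i (pderiv j c)) * constantCoeff g =
      -(constantCoeff h * hessian D z i j) := by
    rw [← hc.constantCoeff_pderiv_pderiv_mul,
      constantCoeff_pderiv_pderiv_eq_neg_hessian z hph (hc.mul_right g)]
  obtain ⟨i₀, j₀, hij⟩ : ∃ i j, hessian D z i j ≠ 0 := by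
    contrapose! hz
    exact Matrix.ext hz
  have hij' := mul_ne_zero_iff.mp ((hprod i₀ j₀).trans_ne (neg_ne_zero.mpr (mul_ne_zero hh hij)))
  have hg : constantCoeff g ≠ 0 := hij'.2
  have hc0 : c ≠ 0 := by
    rintro rfl
    simp at hij'
  set r : K := -(constantCoeff g / constantCoeff h)
  have hr : r ≠ 0 := neg_ne_zero.mpr (div_ne_zero hg hh)
  have hunit : IsUnit (C r : MvPolynomial σ K) := hr.isUnit.map C
  refine ⟨c * C r, C r⁻¹ * g, ?_, hc.mul_right _, ?_, ?_, fun i j => ?_⟩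
  · rw [mul_assoc, ← mul_assoc (C r), ← C_mul, mul_inv_cancel₀ hr, C_1, one_mul]
  · exact (totalDegree_mul _ _).trans (by simpa using hdeg)
  · rw [isRelPrime_mul_unit_right_left hunit,
      isRelPrime_mul_unit_left_right (hr.isUnit.inv.map C)]
    exact isRelPrime_of_minimal_singularAtOrigin hc0 hc hg hmin
  · have := hprod i j
    rw [hc.constantCoeff_pderiv_pderiv_mul, constantCoeff_C]
    simp only [r]
    field_simp
    linear_combination -this

end SingularFactor

section TwistedDerivation

variable {k K σ : Type*} [CommRing k] [CommRing K] [Algebra k K]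

/-- The operator `∇ i - κ i` obtained from `∇ = comovingDeriv D` and a potential `κ`. -/
noncomputable def twistedDeriv (D : σ → Derivation k K K) (κ : σ → K) (i : σ)
    (p : MvPolynomial σ K) : MvPolynomial σ K :=
  comovingDeriv D i p - C (κ i) * p

variable (D : σ → Derivation k K K) (κ : σ → K) (i j : σ) (p q : MvPolynomial σ K)

theorem totalDegree_twistedDeriv_le : (twistedDeriv D κ i p).totalDegree ≤ p.totalDegree :=
  (totalDegree_sub _ _).trans (max_le (totalDegree_comovingDeriv_le _ _ _)
    ((totalDegree_mul _ _).trans (by simp)))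

theorem twistedDeriv_mul :
    twistedDeriv D κ i (p * q) = twistedDeriv D κ i p * q + p * comovingDeriv D i q := by
  simp only [twistedDeriv, Derivation.leibniz, smul_eq_mul]
  ring

theorem twistedDeriv_commutator (hD : ∀ a, D i (D j a) = D j (D i a)) :
    twistedDeriv D κ i (twistedDeriv D κ j p) - twistedDeriv D κ j (twistedDeriv D κ i p) =
      -(C (D i (κ j) - D j (κ i)) * p) := by
  simp only [twistedDeriv, Derivation.leibniz, smul_eq_mul, map_sub, comovingDeriv_C,
    comovingDeriv_comm D i j p hD]
  ring

variable {D κ i j p}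

theorem twistedDeriv_mul_linForm_hessian_comm [Fintype σ] {z : K}
    (hD : ∀ i j a, D i (D j a) = D j (D i a)) {B : MvPolynomial σ K}
    (hB : ∀ i, twistedDeriv D κ i p = B * linForm (hessian D z i)) (i j : σ) :
    twistedDeriv D κ i B * linForm (hessian D z j) - twistedDeriv D κ j B * linForm (hessian D z i)
      = -(C (D i (κ j) - D j (κ i)) * p) := by
  rw [← twistedDeriv_commutator D κ i j p (hD i j), hB, hB, twistedDeriv_mul, twistedDeriv_mul,
    comovingDeriv_linForm_hessian_comm z hD i j]
  ring

end TwistedDerivation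

section PlaneCurve

variable {K : Type*} [Field K] {A : Matrix (Fin 2) (Fin 2) K}

theorem exists_mul_linForm_row (hA : A.det ≠ 0) {u : Fin 2 → MvPolynomial (Fin 2) K}
    (hu : u 0 * linForm (A 1) = u 1 * linForm (A 0)) : ∃ B, ∀ i, u i = B * linForm (A i) := by
  rw [Matrix.det_fin_two] at hA
  have h0 : A 0 ≠ 0 := fun h => hA (by simp [h])
  have h1 (r : K) : A 1 ≠ r • A 0 := fun h => hA <| by
    simp only [h, Pi.smul_apply, smul_eq_mul]
    ring
  obtain ⟨B, hB⟩ := exists_mul_linForm_of_mul_eq h0 h1 hu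
  exact ⟨B, Fin.forall_fin_two.mpr hB⟩

theorem exists_eq_linForm_row_sub (hA : A.det ≠ 0) {q : MvPolynomial (Fin 2) K}
    (hdeg : q.totalDegree ≤ 1) (h0 : constantCoeff q = 0) :
    ∃ κ : Fin 2 → K, q = C (κ 0) * linForm (A 1) - C (κ 1) * linForm (A 0) := by
  rw [eq_linForm_of_totalDegree_le_one hdeg h0]
  generalize (fun i => constantCoeff (pderiv i q)) = b
  refine ⟨fun i => (b 1 * A i 0 - b 0 * A i 1) / A.det, ?_⟩
  have hcoeff (j) : b j = (b 1 * A 0 0 - b 0 * A 0 1) / A.det * A 1 j -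
      (b 1 * A 1 0 - b 0 * A 1 1) / A.det * A 0 j := by
    field_simp
    rw [Matrix.det_fin_two]
    revert j
    exact Fin.forall_fin_two.mpr ⟨by ring, by ring⟩
  have hC (j) := congrArg (C (σ := Fin 2)) (hcoeff j)
  simp only [linForm, Fin.sum_univ_two, map_sub, map_mul] at hC ⊢
  linear_combination X 0 * hC 0 + X 1 * hC 1

theorem eq_zero_of_mul_row_eq (hA : A.det ≠ 0) {v : Fin 2 → K}
    (hv : ∀ j, v 0 * A 1 j = v 1 * A 0 j) : v = 0 := by
  rw [Matrix.det_fin_two] at hA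
  refine funext (Fin.forall_fin_two.mpr
    ⟨(mul_eq_zero_iff_right hA).mp ?_, (mul_eq_zero_iff_right hA).mp ?_⟩)
  · linear_combination A 0 0 * hv 1 - A 0 1 * hv 0
  · linear_combination A 1 0 * hv 1 - A 1 1 * hv 0

theorem totalDegree_le_one_of_linForm_mul_comovingDeriv_sub_eq {k σ : Type*} [CommRing k]
    [Algebra k K] [Fintype σ] {D : σ → Derivation k K K} {a b : σ → K} {i j : σ}
    {c q : MvPolynomial σ K} (hc : c ≠ 0)
    (hq : linForm a * comovingDeriv D i c - linForm b * comovingDeriv D j c = c * q) :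
    q.totalDegree ≤ 1 := by
  rcases eq_or_ne q 0 with rfl | hq0
  · simp
  have hle (a i) : (linForm a * comovingDeriv D i c).totalDegree ≤ 1 + c.totalDegree :=
    (totalDegree_mul _ _).trans (add_le_add (isHomogeneous_linForm _).totalDegree_le
      (totalDegree_comovingDeriv_le _ _ _))
  have := (totalDegree_sub _ _).trans (max_le (hle a i) (hle b j))
  rw [hq, totalDegree_mul_of_isDomain hc hq0] at this
  omega

variable {k : Type*} [CommRing k] [Algebra k K] {D : Fin 2 → Derivation k K K} {z : K}

-- The numerator `ℓ 1 * ∇ 0 c - ℓ 0 * ∇ 1 c` vanishes to second order, so dividing it by `c`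
-- leaves a linear form, which the potential `κ` absorbs.
theorem exists_twistedDeriv_eq_mul_linForm (hA : (hessian D z).det ≠ 0)
    {c g h : MvPolynomial (Fin 2) K}
    (hcg : ∀ i, comovingDeriv D i (c * g) = h * linForm (hessian D z i))
    (hrel : IsRelPrime c g) (hc : SingularAtOrigin c)
    (hhess : ∀ i j, constantCoeff (pderiv i (pderiv j c)) = hessian D z i j) :
    ∃ κ B, ∀ i, twistedDeriv D κ i c = B * linForm (hessian D z i) := by
  set ℓ := fun i => linForm (hessian D z i)
  obtain ⟨q, hq⟩ : c ∣ ℓ 1 * comovingDeriv D 0 c - ℓ 0 * comovingDeriv D 1 c := by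
    refine hrel.dvd_of_dvd_mul_right ⟨ℓ 0 * comovingDeriv D 1 g - ℓ 1 * comovingDeriv D 0 g, ?_⟩
    have h0 := hcg 0
    have h1 := hcg 1
    simp only [Derivation.leibniz, smul_eq_mul] at h0 h1
    linear_combination ℓ 1 * h0 - ℓ 0 * h1
  obtain ⟨j, hj⟩ : ∃ j, hessian D z 0 j ≠ 0 := by
    by_contra! h0
    exact hA (by simp [Matrix.det_fin_two, h0])
  have hc0 : c ≠ 0 := by
    rintro rfl
    simp [← hhess] at hj
  have hq0 : constantCoeff q = 0 := by
    have hjet := congrArg (fun p => constantCoeff (pderiv 0 (pderiv j p))) hq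
    rw [hc.constantCoeff_pderiv_pderiv_mul, hhess] at hjet
    refine (mul_eq_zero_iff_left hj).mp (hjet.symm.trans ?_)
    simp only [map_sub, constantCoeff_pderiv_pderiv_mul, pderiv_linForm,
      constantCoeff_comovingDeriv, pderiv_comovingDeriv, hhess, hc.1, hc.2, constantCoeff_linForm,
      constantCoeff_C, pderiv_C, map_zero, ℓ]
    ring
  obtain ⟨κ, rfl⟩ := exists_eq_linForm_row_sub hA
    (totalDegree_le_one_of_linForm_mul_comovingDeriv_sub_eq hc0 hq) hq0
  refine ⟨κ, exists_mul_linForm_row hA ?_⟩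
  simp only [twistedDeriv]
  linear_combination hq

section Flatness

variable {κ : Fin 2 → K} {c B : MvPolynomial (Fin 2) K} (hA : (hessian D z).det ≠ 0)
  (hc : SingularAtOrigin c)
  (hhess : ∀ i j, constantCoeff (pderiv i (pderiv j c)) = hessian D z i j)
  (hB : ∀ i, twistedDeriv D κ i c = B * linForm (hessian D z i))

include hA hc hhess hB

theorem constantCoeff_eq_neg_one_of_twistedDeriv : constantCoeff B = -1 := by
  obtain ⟨j, hj⟩ : ∃ j, hessian D z 0 j ≠ 0 := by
    by_contra! h0
    exact hA (by simp [Matrix.det_fin_two, h0])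
  have hjet := congrArg (fun p => constantCoeff (pderiv j p)) (hB 0)
  simp only [twistedDeriv, map_sub, pderiv_comovingDeriv, constantCoeff_comovingDeriv,
    constantCoeff_pderiv_mul, hc.1, hc.2, hhess, pderiv_linForm, constantCoeff_linForm,
    constantCoeff_C, pderiv_C, map_zero] at hjet
  refine mul_right_cancel₀ hj ?_
  linear_combination -hjet

variable (hD : ∀ i j a, D i (D j a) = D j (D i a))

include hD

theorem constantCoeff_pderiv_eq_of_twistedDeriv (i : Fin 2) : constantCoeff (pderiv i B) = κ i := by
  have hjet (i j l) := congrArg (fun p => constantCoeff (pderiv j (pderiv l p))) (hB i)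
  simp only [twistedDeriv, map_sub, pderiv_comovingDeriv, constantCoeff_comovingDeriv,
    constantCoeff_pderiv_pderiv_mul, hc.1, hc.2, hhess, pderiv_linForm, constantCoeff_linForm,
    constantCoeff_C, pderiv_C, map_zero] at hjet
  refine congrFun (sub_eq_zero.mp (eq_zero_of_mul_row_eq hA
    (v := (fun i => constantCoeff (pderiv i B)) - κ) fun j => ?_)) i
  have h01 := hjet 0 1 j
  have h10 := hjet 1 0 j
  rw [derivation_hessian_comm z hD 0 1 j, pderiv_pderiv_comm 0 1] at h01
  simp only [Pi.sub_apply]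
  linear_combination h01 - h10 - constantCoeff (pderiv j B) * hessian_symm z hD 1 0

variable [CharZero K]

theorem derivation_comm_of_twistedDeriv : D 0 (κ 1) = D 1 (κ 0) := by
  have hB0 := constantCoeff_eq_neg_one_of_twistedDeriv hA hc hhess hB
  have hB1 := constantCoeff_pderiv_eq_of_twistedDeriv hA hc hhess hB hD
  have hT (i) : constantCoeff (twistedDeriv D κ i B) = 0 := by
    simp [twistedDeriv, constantCoeff_comovingDeriv, hB0, hB1]
  set M := fun i j => constantCoeff (pderiv j (twistedDeriv D κ i B))
  have hM : M 0 1 - M 1 0 = D 0 (κ 1) - D 1 (κ 0) := by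
    simp only [M, twistedDeriv, map_sub, pderiv_comovingDeriv, constantCoeff_comovingDeriv, hB1,
      hB0, constantCoeff_pderiv_mul, constantCoeff_C, pderiv_C, map_zero]
    linear_combination -congrArg constantCoeff (pderiv_pderiv_comm 0 1 B)
  have hjet (i j) := congrArg (fun p => constantCoeff (pderiv i (pderiv j p)))
    (twistedDeriv_mul_linForm_hessian_comm hD hB 0 1)
  simp only [map_sub, map_neg, constantCoeff_pderiv_pderiv_mul, constantCoeff_C, pderiv_C, map_zero,
    hT, hhess, pderiv_linForm, constantCoeff_linForm, hc.1, hc.2] at hjet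
  have h4 : 4 * (hessian D z).det * (D 0 (κ 1) - D 1 (κ 0)) = 0 := by
    rw [Matrix.det_fin_two]
    have h00 := hjet 0 0
    have h01 := hjet 0 1
    have h11 := hjet 1 1
    rw [hessian_symm z hD 1 0] at h00 h01 ⊢
    linear_combination hessian D z 1 1 * h00 + hessian D z 0 0 * h11 -
      2 * hessian D z 0 1 * h01 -
      2 * (hessian D z 0 0 * hessian D z 1 1 - hessian D z 0 1 * hessian D z 0 1) * hM
  refine sub_eq_zero.mp ?_
  simpa [hA] using h4

end Flatness

end PlaneCurve

section TwistedSequence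

variable {k K σ : Type*} [CommRing k] [Field K] [Algebra k K]

theorem totalDegree_succ_le_of_twistedDeriv_eq [Fintype σ] {D : σ → Derivation k K K} {κ : σ → K}
    {i : σ} {a : σ → K} (ha : a ≠ 0) {p q : MvPolynomial σ K}
    (h : twistedDeriv D κ i p = q * linForm a) (hq : q ≠ 0) :
    q.totalDegree + 1 ≤ p.totalDegree := by
  rw [← totalDegree_linForm ha,
    ← totalDegree_mul_of_isDomain hq ((linForm_eq_zero_iff a).not.mpr ha), ← h]
  exact totalDegree_twistedDeriv_le _ _ _ _

variable {D : Fin 2 → Derivation k K K} {κ : Fin 2 → K} {z : K} {c B : MvPolynomial (Fin 2) K}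

theorem exists_twistedDeriv_sequence (hA : (hessian D z).det ≠ 0)
    (hD : ∀ i j a, D i (D j a) = D j (D i a)) (hκ : D 0 (κ 1) = D 1 (κ 0))
    (hB : ∀ i, twistedDeriv D κ i c = B * linForm (hessian D z i)) :
    ∃ b : ℕ → MvPolynomial (Fin 2) K, b 0 = c ∧
      ∀ n i, twistedDeriv D κ i (b n) = b (n + 1) * linForm (hessian D z i) := by
  let S := {s : MvPolynomial (Fin 2) K × MvPolynomial (Fin 2) K //
    ∀ i, twistedDeriv D κ i s.1 = s.2 * linForm (hessian D z i)}
  have next (s : S) : ∃ t : S, t.1.1 = s.1.2 := by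
    obtain ⟨r, hr⟩ := exists_mul_linForm_row hA (u := fun i => twistedDeriv D κ i s.1.2) <| by
      have := twistedDeriv_mul_linForm_hessian_comm hD s.2 0 1
      rwa [hκ, sub_self, C_0, zero_mul, neg_zero, sub_eq_zero] at this
    exact ⟨⟨(s.1.2, r), hr⟩, rfl⟩
  choose f hf using next
  refine ⟨fun n => (f^[n] ⟨(c, B), hB⟩).1.1, rfl, fun n i => ?_⟩
  simp only [Function.iterate_succ_apply', hf]
  exact (f^[n] ⟨(c, B), hB⟩).2 i

theorem totalDegree_add_le_of_twistedDeriv_sequence (hA : (hessian D z).det ≠ 0)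
    {b : ℕ → MvPolynomial (Fin 2) K}
    (hb : ∀ n i, twistedDeriv D κ i (b n) = b (n + 1) * linForm (hessian D z i)) (n : ℕ)
    (hn : b n ≠ 0) : (b n).totalDegree + n ≤ (b 0).totalDegree := by
  have hrow : hessian D z 0 ≠ 0 := fun h => hA (by simp [Matrix.det_fin_two, h])
  induction n with
  | zero => simp
  | succ n ih =>
    have hbn : b n ≠ 0 := by
      intro h0
      have := hb n 0
      rw [h0, twistedDeriv, map_zero, mul_zero, sub_zero] at this
      exact mul_ne_zero hn ((linForm_eq_zero_iff _).not.mpr hrow) this.symm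
    have := totalDegree_succ_le_of_twistedDeriv_eq hrow (hb n 0) hn
    have := ih hbn
    omega

end TwistedSequence

theorem totalDegree_aeval_le {R A σ τ : Type*} [CommSemiring R] [CommSemiring A] [Algebra R A]
    {f : σ → MvPolynomial τ A} (hf : ∀ i, (f i).totalDegree ≤ 1) (p : MvPolynomial σ R) :
    (aeval f p).totalDegree ≤ p.totalDegree := by
  rw [aeval_def, eval₂_eq]
  refine totalDegree_finsetSum_le fun m hm => (totalDegree_mul _ _).trans ?_
  refine le_trans ?_ (le_totalDegree hm)
  rw [MvPolynomial.algebraMap_apply, totalDegree_C, zero_add]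
  refine (totalDegree_finsetProd _ _).trans (Finset.sum_le_sum fun i _ => ?_)
  exact (totalDegree_pow _ _).trans ((Nat.mul_le_mul_left _ (hf i)).trans (mul_one _).le)

section Descent

variable {k K σ ι : Type*} [Field k] [Field K] [Algebra k K]

theorem exists_eq_C_mul_map_of_coeffDeriv_eq {D : ι → Derivation k K K}
    (hconst : ∀ a, (∀ i, D i a = 0) → a ∈ (algebraMap k K).range) {κ : ι → K}
    {G : MvPolynomial σ K} (hG : ∀ i, coeffDeriv (D i) G = C (κ i) * G) :
    ∃ γ ≠ 0, ∃ G₀ : MvPolynomial σ k, G = C γ * map (algebraMap k K) G₀ := by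
  rcases eq_or_ne G 0 with rfl | hG0
  · exact ⟨1, one_ne_zero, 0, by simp⟩
  obtain ⟨m₀, hm₀⟩ := ne_zero_iff.mp hG0
  have hcoeff (i m) : D i (coeff m G) = κ i * coeff m G := by
    simpa using congrArg (coeff m) (hG i)
  have hratio (m) : (coeff m₀ G)⁻¹ * coeff m G ∈ (algebraMap k K).range := by
    refine hconst _ fun i => ?_
    simp only [Derivation.leibniz, Derivation.leibniz_inv, hcoeff, smul_eq_mul]
    field_simp
    ring
  obtain ⟨G₀, hG₀⟩ : C (coeff m₀ G)⁻¹ * G ∈ (map (σ := σ) (algebraMap k K)).range := by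
    refine mem_range_map_iff_coeffs_subset.mpr fun a ha => ?_
    obtain ⟨m, -, rfl⟩ := mem_coeffs_iff.mp ha
    rw [coeff_C_mul]
    exact hratio m
  refine ⟨coeff m₀ G, hm₀, G₀, ?_⟩
  rw [hG₀, ← mul_assoc, ← C_mul, mul_inv_cancel₀ hm₀, C_1, one_mul]

end Descent

section TaylorSum

variable {k K σ : Type*} [CommRing k] [Field K] [Algebra k K]

/-- The polynomial `q (Y - x)`, for `q` a polynomial in the coordinates centred at `x`. The
variables of the target are the ambient coordinates `Y` and one more coordinate `none`. -/
noncomputable def recenter (x : σ → K) : MvPolynomial σ K →ₐ[K] MvPolynomial (Option σ) K :=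
  aeval fun j => X (some j) - C (x j)

@[simp]
theorem recenter_C (x : σ → K) (a : K) : recenter x (C a) = C a := algHom_C _ _

theorem totalDegree_recenter_le (x : σ → K) (q : MvPolynomial σ K) :
    (recenter x q).totalDegree ≤ q.totalDegree :=
  totalDegree_aeval_le (fun _ => (totalDegree_sub_C_le _ _).trans (totalDegree_X _).le) q

theorem eval_recenter (x : σ → K) (z : K) (q : MvPolynomial σ K) :
    eval (fun o : Option σ => o.elim z x) (recenter x q) = constantCoeff q := by
  induction q using MvPolynomial.induction_on with
  | C a => simp [recenter]
  | add p q hp hq => simp only [map_add, hp, hq]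
  | mul_X p i _ => simp [recenter]

theorem coeffDeriv_recenter [DecidableEq σ] {D : σ → Derivation k K K} {x : σ → K} {i : σ}
    (hx : ∀ j, D i (x j) = Pi.single (M := fun _ => K) i 1 j) (q : MvPolynomial σ K) :
    coeffDeriv (D i) (recenter x q) = recenter x (comovingDeriv D i q) := by
  induction q using MvPolynomial.induction_on with
  | C a => simp [comovingDeriv_C]
  | add p q hp hq => simp only [map_add, hp, hq]
  | mul_X p j hp =>
    have hX : coeffDeriv (D i) (recenter x (X j)) = recenter x (comovingDeriv D i (X j)) := by
      simp [recenter, comovingDeriv_apply, hx, pderiv_X, Pi.single_apply, apply_ite]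
    simp only [map_mul, Derivation.leibniz, smul_eq_mul, map_add, hp, hX]

variable [Fintype σ] (D : σ → Derivation k K K) (x : σ → K) (z : K)

/-- The affine form cutting out the tangent hyperplane at `(x, z)` of the graph of a function `z`
of the coordinates `x`, with respect to which the `D i` are the partial derivatives. -/
noncomputable def tangentForm : MvPolynomial (Option σ) K :=
  X none - C z - recenter x (linForm fun j => D j z)

/-- The sum `∑ j < N, b j (Y - x) * ζ ^ j / j!`, with `ζ` the tangent form at `(x, z)`. -/
noncomputable def taylorSum (b : ℕ → MvPolynomial σ K) (N : ℕ) : MvPolynomial (Option σ) K :=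
  ∑ j ∈ Finset.range N, C (j.factorial : K)⁻¹ * recenter x (b j) * tangentForm D x z ^ j

theorem totalDegree_tangentForm_le : (tangentForm D x z).totalDegree ≤ 1 :=
  (totalDegree_sub _ _).trans (max_le ((totalDegree_sub_C_le _ _).trans (totalDegree_X _).le)
    ((totalDegree_recenter_le x _).trans (isHomogeneous_linForm fun j => D j z).totalDegree_le))

theorem eval_tangentForm : eval (fun o : Option σ => o.elim z x) (tangentForm D x z) = 0 := by
  simp [tangentForm, eval_recenter]

theorem totalDegree_taylorSum_le {b : ℕ → MvPolynomial σ K} {N n : ℕ}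
    (hb : ∀ j < N, (b j).totalDegree + j ≤ n) : (taylorSum D x z b N).totalDegree ≤ n := by
  refine totalDegree_finsetSum_le fun j hj => ?_
  have hpow : (tangentForm D x z ^ j).totalDegree ≤ j := (totalDegree_pow _ _).trans
    ((Nat.mul_le_mul_left j (totalDegree_tangentForm_le D x z)).trans (mul_one j).le)
  have hmul : (C (j.factorial : K)⁻¹ * recenter x (b j)).totalDegree ≤ (b j).totalDegree :=
    (totalDegree_mul _ _).trans (by simpa using totalDegree_recenter_le x (b j))
  exact (totalDegree_mul _ _).trans
    ((add_le_add hmul hpow).trans (hb j (Finset.mem_range.mp hj)))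

theorem eval_taylorSum_succ (b : ℕ → MvPolynomial σ K) (N : ℕ) :
    eval (fun o : Option σ => o.elim z x) (taylorSum D x z b (N + 1)) = constantCoeff (b 0) := by
  simp [taylorSum, Finset.sum_range_succ', eval_recenter, eval_tangentForm]

theorem taylorSum_succ_ne_zero {b : ℕ → MvPolynomial σ K} (hb : b 0 ≠ 0) (N : ℕ) :
    taylorSum D x z b (N + 1) ≠ 0 := by
  let restrict : MvPolynomial (Option σ) K →ₐ[K] MvPolynomial σ K :=
    aeval fun o => o.elim (C z + linForm fun j => D j z) fun j => X j + C (x j)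
  have hrecenter (q) : restrict (recenter x q) = q := by
    have : restrict.comp (recenter x) = AlgHom.id K _ := by
      ext i
      simp [restrict, recenter, ← algebraMap_eq]
    exact DFunLike.congr_fun this q
  have htangent : restrict (tangentForm D x z) = 0 := by
    simp only [tangentForm, map_sub, hrecenter]
    simp [restrict, ← algebraMap_eq]
  intro h
  refine hb ?_
  simpa [taylorSum, Finset.sum_range_succ', hrecenter, htangent] using congrArg restrict h

section Derivatives

variable {D x z} [DecidableEq σ] (hx : ∀ i j, D i (x j) = Pi.single (M := fun _ => K) i 1 j)

include hx

theorem coeffDeriv_tangentForm (i : σ) :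
    coeffDeriv (D i) (tangentForm D x z) = -recenter x (linForm (hessian D z i)) := by
  rw [tangentForm, map_sub, map_sub, coeffDeriv_X, coeffDeriv_C, coeffDeriv_recenter (hx i),
    comovingDeriv_linForm, map_sub, recenter_C]
  change _ = -recenter x (linForm fun j => D i (D j z))
  ring

theorem coeffDeriv_taylorSum_succ [CharZero K] {κ : σ → K} {b : ℕ → MvPolynomial σ K}
    (hb : ∀ n i, twistedDeriv D κ i (b n) = b (n + 1) * linForm (hessian D z i)) (i : σ) (N : ℕ) :
    coeffDeriv (D i) (taylorSum D x z b (N + 1)) = C (κ i) * taylorSum D x z b (N + 1) +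
      C (N.factorial : K)⁻¹ * recenter x (b (N + 1) * linForm (hessian D z i)) *
        tangentForm D x z ^ N := by
  have hrec (n) : coeffDeriv (D i) (recenter x (b n)) =
      C (κ i) * recenter x (b n) + recenter x (b (n + 1) * linForm (hessian D z i)) := by
    rw [coeffDeriv_recenter (hx i), ← hb n i, twistedDeriv, map_sub, map_mul, recenter_C]
    ring
  induction N with
  | zero => simp [taylorSum, hrec]
  | succ N ih =>
    have hfact : C ((N + 1).factorial : K)⁻¹ * ((N + 1 : ℕ) : MvPolynomial (Option σ) K) =
        C (N.factorial : K)⁻¹ := by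
      rw [← C_eq_coe_nat, ← C_mul, Nat.factorial_succ]
      congr 1
      have : ((N + 1 : ℕ) : K) ≠ 0 := Nat.cast_ne_zero.mpr N.succ_ne_zero
      push_cast at this ⊢
      field_simp
    have hconst :
        coeffDeriv (D i) (C ((N + 1).factorial : K)⁻¹ : MvPolynomial (Option σ) K) = 0 := by
      simp [Derivation.leibniz_inv]
    rw [taylorSum, Finset.sum_range_succ, ← taylorSum, map_add, ih]
    simp only [Derivation.leibniz, Derivation.leibniz_pow, smul_eq_mul, nsmul_eq_mul, hrec, hconst,
      coeffDeriv_tangentForm hx, map_mul, Nat.add_sub_cancel]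
    linear_combination (exp := 1) -(recenter x (b (N + 1)) * tangentForm D x z ^ N *
      recenter x (linForm (hessian D z i))) * hfact

end Derivatives

end TaylorSum

section AlgebraicRelation

variable {k K : Type*} [Field k] [Field K] [Algebra k K] [CharZero K]

-- The Taylor sum is an eigenvector of every `coeffDeriv (D i)`, so up to a scalar its coefficients
-- are constants.
theorem exists_aeval_eq_zero_of_twistedDeriv_sequence {σ : Type*} [Fintype σ] [DecidableEq σ]
    {D : σ → Derivation k K K} (hconst : ∀ a, (∀ i, D i a = 0) → a ∈ (algebraMap k K).range)
    {x : σ → K} (hx : ∀ i j, D i (x j) = Pi.single (M := fun _ => K) i 1 j) {z : K} {κ : σ → K}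
    {b : ℕ → MvPolynomial σ K}
    (hb : ∀ n i, twistedDeriv D κ i (b n) = b (n + 1) * linForm (hessian D z i))
    (hb0 : b 0 ≠ 0) (hval : constantCoeff (b 0) = 0) {N : ℕ} (hN : b (N + 1) = 0)
    (hdeg : ∀ j ≤ N, (b j).totalDegree + j ≤ N) :
    ∃ G : MvPolynomial (Option σ) k, G ≠ 0 ∧ G.totalDegree ≤ N ∧
      aeval (fun o : Option σ => o.elim z x) G = 0 := by
  have hT (i) : coeffDeriv (D i) (taylorSum D x z b (N + 1)) =
      C (κ i) * taylorSum D x z b (N + 1) := by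
    simp [coeffDeriv_taylorSum_succ hx hb, hN]
  obtain ⟨γ, hγ, G, hG⟩ := exists_eq_C_mul_map_of_coeffDeriv_eq hconst hT
  have hmap : map (algebraMap k K) G = C γ⁻¹ * taylorSum D x z b (N + 1) := by
    rw [hG, ← mul_assoc, ← C_mul, inv_mul_cancel₀ hγ, C_1, one_mul]
  refine ⟨G, ?_, ?_, ?_⟩
  · rintro rfl
    exact taylorSum_succ_ne_zero D x z hb0 N (by simpa using hG)
  · rw [totalDegree, ← support_map_of_injective G (algebraMap k K).injective, ← totalDegree, hmap,
      ← smul_eq_C_mul]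
    exact (totalDegree_smul_le _ _).trans
      (totalDegree_taylorSum_le D x z fun j hj => hdeg j (Nat.lt_succ_iff.mp hj))
  · rw [aeval_def, ← eval_map, hmap, map_mul, eval_taylorSum_succ, hval, mul_zero]

theorem exists_aeval_eq_zero_of_singular_factor {D : Fin 2 → Derivation k K K}
    (hD : ∀ i j a, D i (D j a) = D j (D i a))
    (hconst : ∀ a, (∀ i, D i a = 0) → a ∈ (algebraMap k K).range) {x : Fin 2 → K}
    (hx : ∀ i j, D i (x j) = Pi.single (M := fun _ => K) i 1 j) {z : K}
    (hz : (hessian D z).det ≠ 0) {p h c : MvPolynomial (Fin 2) K}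
    (hph : ∀ i, comovingDeriv D i p = h * linForm (hessian D z i)) (hh : constantCoeff h ≠ 0)
    (hcp : c ∣ p) (hsing : SingularAtOrigin c) :
    ∃ G : MvPolynomial (Option (Fin 2)) k, G ≠ 0 ∧ G.totalDegree ≤ c.totalDegree ∧
      aeval (fun o : Option (Fin 2) => o.elim z x) G = 0 := by
  have hz0 : hessian D z ≠ 0 := fun h0 => hz (by simp [h0])
  obtain ⟨c, g, hcg, hc, hdeg, hrel, hhess⟩ := exists_factor_with_hessian hph hh hz0 hcp hsing
  have hc0 : c ≠ 0 := by
    rintro rfl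
    exact hz0 (Matrix.ext fun i j => by simp [← hhess])
  obtain ⟨κ, B, hB⟩ := exists_twistedDeriv_eq_mul_linForm hz (hcg ▸ hph) hrel hc hhess
  obtain ⟨b, rfl, hb⟩ := exists_twistedDeriv_sequence hz hD
    (derivation_comm_of_twistedDeriv hz hc hhess hB hD) hB
  have hbdeg := totalDegree_add_le_of_twistedDeriv_sequence hz hb
  have hlast : b ((b 0).totalDegree + 1) = 0 := by
    by_contra hne
    have := hbdeg _ hne
    omega
  obtain ⟨G, hG, hGdeg, hGval⟩ := exists_aeval_eq_zero_of_twistedDeriv_sequence hconst hx hb hc0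
    hc.1 hlast fun j hj => by
      rcases eq_or_ne (b j) 0 with h0 | h0
      · simpa [h0] using hj
      · exact hbdeg j h0
  exact ⟨G, hG, hGdeg.trans hdeg, hGval⟩

end AlgebraicRelation

section AffinePullback

variable {k R S σ τ : Type*} [CommRing k] [CommRing R] [CommRing S] [Algebra k R] [Algebra k S]
  [Fintype τ]

/-- The polynomial `t ↦ F (P + ∑ j, t j * V j)`: the pullback of `F` along the affine
parametrization with base point `P` and directions `V j`. -/
noncomputable def affinePullback (F : MvPolynomial σ k) (P : σ → R) (V : τ → σ → R) :
    MvPolynomial τ R :=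
  aeval (fun i => C (P i) + linForm fun j => V j i) F

variable (F : MvPolynomial σ k) (P : σ → R) (V : τ → σ → R)

theorem map_affinePullback (φ : R →ₐ[k] S) :
    map (φ : R →+* S) (affinePullback F P V) =
      affinePullback F (fun i => φ (P i)) fun j i => φ (V j i) := by
  change mapAlgHom φ _ = _
  rw [affinePullback, ← AlgHom.comp_apply, comp_aeval, affinePullback]
  congr 2
  ext1 i
  simp [linForm]

theorem eval_affinePullback (t : τ → R) :
    eval t (affinePullback F P V) = aeval (fun i => P i + ∑ j, V j i * t j) F := by
  rw [affinePullback, ← aeval_eq_eval, ← AlgHom.coe_restrictScalars' k, ← AlgHom.comp_apply,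
    comp_aeval]
  simp [linForm]

theorem constantCoeff_affinePullback : constantCoeff (affinePullback F P V) = aeval P F := by
  simp [← eval_zero, eval_affinePullback]

theorem totalDegree_affinePullback_le :
    (affinePullback F P V).totalDegree ≤ F.totalDegree :=
  totalDegree_aeval_le (fun i => (totalDegree_add _ _).trans (max_le (by simp)
    (isHomogeneous_linForm fun j => V j i).totalDegree_le)) F

theorem pderiv_affinePullback [Fintype σ] (j : τ) :
    pderiv j (affinePullback F P V) = ∑ i, affinePullback (pderiv i F) P V * C (V j i) := by
  have h := derivation_aeval ((pderiv (R := R) j).restrictScalars k)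
    (fun i => C (P i) + linForm fun j => V j i) F
  simpa [affinePullback] using h

end AffinePullback

section OsculatingPullback

variable {k K σ τ : Type*} [CommRing k] [CommRing K] [Algebra k K] [Fintype τ]

theorem comovingDeriv_affinePullback [Fintype σ] (D : τ → Derivation k K K) (F : MvPolynomial σ k)
    (P : σ → K) (V : τ → σ → K) (i : τ) :
    comovingDeriv D i (affinePullback F P V) = ∑ m, affinePullback (pderiv m F) P V *
      (C (D i (P m) - V i m) + linForm fun j => D i (V j m)) := by
  rw [affinePullback, derivation_aeval]
  refine Finset.sum_congr rfl fun m _ => congrArg _ ?_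
  rw [map_add, comovingDeriv_C, comovingDeriv_linForm, map_sub]
  ring

theorem comovingDeriv_affinePullback_tangent [Finite σ] {D : τ → Derivation k K K} {P : σ → K}
    {m : σ} (hP : ∀ m' ≠ m, hessian D (P m') = 0) (F : MvPolynomial σ k) (i : τ) :
    comovingDeriv D i (affinePullback F P fun j m' => D j (P m')) =
      affinePullback (pderiv m F) P (fun j m' => D j (P m')) * linForm (hessian D (P m) i) := by
  cases nonempty_fintype σ
  rw [comovingDeriv_affinePullback, Finset.sum_eq_single_of_mem m (Finset.mem_univ m)]
  · rw [sub_self, C_0, zero_add]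
    rfl
  · intro m' _ hm'
    have : (fun j => D i (D j (P m'))) = 0 := congrFun (hP m' hm') i
    simp [this, (linForm_eq_zero_iff (0 : τ → K)).mpr rfl]

end OsculatingPullback

section RuledPoint

variable {k R σ τ : Type*} [CommRing k]

theorem eq_zero_of_comovingDeriv_eq_zero [CommRing R] [IsDomain R] [CharZero R] [Algebra k R]
    {D : τ → Derivation k R R} {p : MvPolynomial τ R} (hp : ∀ i, comovingDeriv D i p = 0)
    (h0 : constantCoeff p = 0) : p = 0 := by
  classical
  have hcoeff : ∀ n (m : τ →₀ ℕ), m.degree = n → coeff m p = 0 := by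
    intro n
    induction n with
    | zero =>
      intro m hm
      rwa [m.degree_eq_zero_iff.mp hm]
    | succ n ih =>
      intro m hm
      obtain ⟨i, hi⟩ : ∃ i, m i ≠ 0 := by
        by_contra! h
        simp [show m = 0 from Finsupp.ext h] at hm
      obtain ⟨m, rfl⟩ :=
        exists_add_of_le (Finsupp.single_le_iff.mpr (Nat.one_le_iff_ne_zero.mpr hi))
      have hpi := congrArg (coeff m) (hp i)
      rw [comovingDeriv_apply, coeff_sub, coeff_coeffDeriv, coeff_pderiv,
        ih m (by simpa [add_comm 1] using hm), map_zero, zero_sub, coeff_zero, neg_eq_zero] at hpi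
      rw [add_comm]
      exact (mul_eq_zero.mp hpi).resolve_right (Nat.cast_add_one_ne_zero (m i))
  ext m
  exact hcoeff _ m rfl

theorem affinePullback_eq_zero_of_derivation [CommRing R] [IsDomain R] [CharZero R] [Algebra k R]
    [Finite σ] {Δ : Derivation k R R} {F : MvPolynomial σ k} {P : σ → R} (hP : aeval P F = 0)
    (hΔ : ∀ i, Δ (Δ (P i)) = 0) : affinePullback F P (fun (_ : Unit) i => Δ (P i)) = 0 := by
  cases nonempty_fintype σ
  refine eq_zero_of_comovingDeriv_eq_zero (D := fun _ => Δ) (fun i => ?_)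
    ((constantCoeff_affinePullback _ _ _).trans hP)
  simp [comovingDeriv_affinePullback, hΔ, linForm]

variable {K : Type*} [Field K] [Algebra k K] {D : Fin 2 → Derivation k K K} {z : K}

theorem eq_zero_of_mulVec_eq_zero_of_apply_eq_zero {A : Matrix (Fin 2) (Fin 2) K} (hA : A ≠ 0)
    {u v : Fin 2 → K} (hu : A.mulVec u = 0) (hv : A.mulVec v = 0) {i : Fin 2} (hui : u i = 0)
    (hvi : v i ≠ 0) : u = 0 := by
  have hdet : u 0 * v 1 = u 1 * v 0 := by
    contrapose! hA
    have hmul (r c) : A r c * (u 0 * v 1 - u 1 * v 0) = 0 := by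
      have hur := congrFun hu r
      have hvr := congrFun hv r
      simp only [Matrix.mulVec, dotProduct, Fin.sum_univ_two, Pi.zero_apply] at hur hvr
      revert c
      exact Fin.forall_fin_two.mpr ⟨by linear_combination v 1 * hur - u 1 * hvr,
        by linear_combination u 0 * hvr - v 0 * hur⟩
    exact Matrix.ext fun r c => (mul_eq_zero.mp (hmul r c)).resolve_right (sub_ne_zero.mpr hA)
  refine funext (Fin.forall_fin_two.mpr ?_)
  obtain rfl | rfl : i = 0 ∨ i = 1 := by omega
  · exact ⟨hui, by simpa [hui, hvi] using hdet.symm⟩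
  · exact ⟨by simpa [hui, hvi] using hdet, hui⟩

-- Differentiating `∑ j, D l (D j z) * w j = 0` along `w` shows that the derivative of `w` along `w`
-- is again in the kernel, so it vanishes if a coordinate of `w` is normalized to `1`.
theorem exists_hessian_mulVec_eq_zero_of_det_eq_zero (hD : ∀ i j a, D i (D j a) = D j (D i a))
    (hz : (hessian D z).det = 0) :
    ∃ w ≠ 0, (hessian D z).mulVec w = 0 ∧ ∀ i, ∑ j, w j * D j (w i) = 0 := by
  rcases eq_or_ne (hessian D z) 0 with h0 | h0
  · exact ⟨1, one_ne_zero, by simp [h0], by simp⟩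
  obtain ⟨v, hv, hHv⟩ := Matrix.exists_mulVec_eq_zero_iff.mpr hz
  obtain ⟨i, hi⟩ := Function.ne_iff.mp hv
  set w := (v i)⁻¹ • v
  have hwi : w i = 1 := inv_mul_cancel₀ hi
  have hw : (hessian D z).mulVec w = 0 := by rw [Matrix.mulVec_smul, hHv, smul_zero]
  refine ⟨w, fun h => by simp [h] at hwi, hw, congrFun (?_ : (fun i => ∑ j, w j * D j (w i)) = 0)⟩
  refine eq_zero_of_mulVec_eq_zero_of_apply_eq_zero h0 ?_ hw (i := i) (by simp [hwi])
    (hwi.trans_ne one_ne_zero)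
  have hrow (r) := congrFun hw r
  have hD' (l r) := congrArg (D l) (hrow r)
  simp only [Matrix.mulVec, dotProduct, Fin.sum_univ_two, Pi.zero_apply, map_add, map_zero,
    Derivation.leibniz, smul_eq_mul] at hrow hD'
  ext r
  simp only [Matrix.mulVec, dotProduct, Fin.sum_univ_two, Pi.zero_apply]
  have hsymm := hessian_symm z hD 1 0
  have hcomm (l j) := derivation_hessian_comm z hD l r j
  linear_combination w 0 * hD' 0 r + w 1 * hD' 1 r - w 0 * hD' r 0 - w 1 * hD' r 1 +
    D r (w 0) * hrow 0 + D r (w 1) * hrow 1 +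
    (w 1 * D r (w 0) - w 0 * D r (w 1)) * hsymm -
    w 0 * (w 0 * hcomm 0 0 + w 1 * hcomm 0 1) - w 1 * (w 0 * hcomm 1 0 + w 1 * hcomm 1 1)

theorem exists_affinePullback_eq_zero_of_det_hessian_eq_zero [CharZero K] [Finite σ]
    (hD : ∀ i j a, D i (D j a) = D j (D i a)) {P : σ → K} {m : σ}
    (hP : ∀ m' ≠ m, hessian D (P m') = 0) (hm : (hessian D (P m)).det = 0) {F : MvPolynomial σ k}
    (hF : aeval P F = 0) :
    ∃ w : Fin 2 → K, w ≠ 0 ∧ affinePullback F P (fun (_ : Unit) i => ∑ j, w j * D j (P i)) = 0 := by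
  obtain ⟨w, hw0, hw, hΔw⟩ := exists_hessian_mulVec_eq_zero_of_det_eq_zero hD hm
  have hw' (i) : (hessian D (P i)).mulVec w = 0 := by
    rcases eq_or_ne i m with rfl | hi
    · exact hw
    · rw [hP i hi, Matrix.zero_mulVec]
  let Δ : Derivation k K K := ∑ j, w j • D j
  have hΔ (a) : Δ a = ∑ j, w j * D j a := by simp [Δ]
  refine ⟨w, hw0, ?_⟩
  simp only [← hΔ]
  refine affinePullback_eq_zero_of_derivation hF fun i => ?_
  have hrow (j) := congrFun (hw' i) j
  simp only [Matrix.mulVec, dotProduct, Fin.sum_univ_two, Pi.zero_apply, hessian, Matrix.of_apply]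
    at hrow hΔw
  simp only [hΔ, Fin.sum_univ_two, map_add, Derivation.leibniz, smul_eq_mul]
  linear_combination w 0 * hrow 0 + w 1 * hrow 1 + D 0 (P i) * hΔw 0 + D 1 (P i) * hΔw 1

end RuledPoint

section DerivationExtension

variable {k A K : Type*} [CommRing k] [CommRing A] [CommRing K] [Algebra k K] [Algebra A K]

open KaehlerDifferential in
theorem exists_derivation_extending [Algebra k A] [IsScalarTower k A K] [Algebra.FormallyEtale A K]
    (d : Derivation k A K) : ∃ D : Derivation k K K, ∀ a, D (algebraMap A K a) = d a := by
  let l := d.liftKaehlerDifferential.liftBaseChange K ∘ₗ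
    (tensorKaehlerEquivOfFormallyEtale k A K).symm.toLinearMap
  refine ⟨l.compDer (KaehlerDifferential.D k K), fun a => ?_⟩
  change d.liftKaehlerDifferential.liftBaseChange K
    ((tensorKaehlerEquivOfFormallyEtale k A K).symm (KaehlerDifferential.D k K _)) = _
  rw [tensorKaehlerEquivOfFormallyEtale_symm_D_algebraMap, LinearMap.liftBaseChange_one_tmul,
    Derivation.liftKaehlerDifferential_comp_D]

theorem derivation_eq_zero_of_algebraMap_eq_zero [Algebra.FormallyUnramified A K]
    {D : Derivation k K K} (hD : ∀ a, D (algebraMap A K a) = 0) : D = 0 := by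
  let D' : Derivation A K K :=
    Derivation.mk' ⟨⟨D, map_add D⟩, fun a b => by simp [Algebra.smul_def, hD]⟩ fun a b => by simp
  have hD' : D' = 0 := by
    ext b
    rw [← D'.liftKaehlerDifferential_comp_D, Subsingleton.elim (KaehlerDifferential.D A K b) 0,
      map_zero, Derivation.zero_apply]
  exact Derivation.ext fun b => DFunLike.congr_fun hD' b

end DerivationExtension

theorem formallyEtale_of_isAlgebraic (A K : Type*) [CommRing A] [IsDomain A] [CharZero A] [Field K]
    [Algebra A K] [FaithfulSMul A K] [Algebra.IsAlgebraic A K] : Algebra.FormallyEtale A K := by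
  let := FractionRing.liftAlgebra A K
  have := FractionRing.isScalarTower_liftAlgebra A K
  have : CharZero (FractionRing A) :=
    charZero_of_injective_algebraMap (IsFractionRing.injective A (FractionRing A))
  have : Algebra.IsAlgebraic (FractionRing A) K := IsFractionRing.comap_isAlgebraic_iff.mp ‹_›
  have : Algebra.FormallyEtale A (FractionRing A) := .of_isLocalization (nonZeroDivisors A)
  have : Algebra.FormallyEtale (FractionRing A) K := .of_isSeparable _ _
  exact .comp A (FractionRing A) K

section TranscendenceBasis

variable {k K ι : Type*} [Field k] [CharZero k] [Field K] [Algebra k K] {x : ι → K}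

theorem exists_derivation_of_isTranscendenceBasis (hx : IsTranscendenceBasis k x) (f : ι → K) :
    ∃ D : Derivation k K K, ∀ i, D (x i) = f i := by
  let := (aeval x : MvPolynomial ι k →ₐ[k] K).toAlgebra
  have : IsScalarTower k (MvPolynomial ι k) K := .of_algHom (aeval x)
  have : FaithfulSMul (MvPolynomial ι k) K := (faithfulSMul_iff_algebraMap_injective _ _).mpr hx.1
  have := hx.isAlgebraic
  have : Algebra.IsAlgebraic (MvPolynomial ι k) K :=
    Algebra.IsAlgebraic.of_ringHom_of_comp_eq hx.1.aevalEquiv (RingHom.id K)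
      hx.1.aevalEquiv.surjective Function.injective_id (by
        ext i <;> simp [RingHom.algebraMap_toAlgebra])
  have := formallyEtale_of_isAlgebraic (MvPolynomial ι k) K
  obtain ⟨D, hD⟩ := exists_derivation_extending (mkDerivation (A := K) k f)
  exact ⟨D, fun i => by simpa [RingHom.algebraMap_toAlgebra] using hD (X i)⟩

theorem derivation_ext_of_isTranscendenceBasis (hx : IsTranscendenceBasis k x)
    {D E : Derivation k K K} (h : ∀ i, D (x i) = E (x i)) : D = E := by
  have := hx.isAlgebraic
  have : CharZero (Algebra.adjoin k (Set.range x)) :=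
    charZero_of_injective_algebraMap (algebraMap k _).injective
  have := formallyEtale_of_isAlgebraic (Algebra.adjoin k (Set.range x)) K
  refine sub_eq_zero.mp (derivation_eq_zero_of_algebraMap_eq_zero
    (A := Algebra.adjoin k (Set.range x)) fun a => ?_)
  exact sub_eq_zero.mpr (Derivation.eqOn_adjoin (Set.forall_mem_range.mpr h) a.2)

variable [DecidableEq ι] {D : ι → Derivation k K K}

theorem derivation_comm_of_isTranscendenceBasis (hx : IsTranscendenceBasis k x)
    (hD : ∀ i j, D i (x j) = Pi.single (M := fun _ => K) i 1 j) (i j : ι) (a : K) :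
    D i (D j a) = D j (D i a) := by
  have hcomm : ⁅D i, D j⁆ = 0 := derivation_ext_of_isTranscendenceBasis hx fun l => by
    simp [Derivation.commutator_apply, hD, Pi.single_apply, apply_ite]
  rw [← sub_eq_zero, ← Derivation.commutator_apply, hcomm, Derivation.zero_apply]

theorem mem_range_algebraMap_of_derivation_eq_zero [IsAlgClosed k] [Finite ι]
    (hx : IsTranscendenceBasis k x)
    (hD : ∀ i j, D i (x j) = Pi.single (M := fun _ => K) i 1 j) {e : K} (he : ∀ i, D i e = 0) :
    e ∈ (algebraMap k K).range := by
  cases nonempty_fintype ι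
  by_cases hint : IsIntegral k e
  · exact minpoly.mem_range_of_degree_eq_one k e
      (IsAlgClosed.degree_eq_one_of_irreducible k (minpoly.irreducible hint))
  have htrans : AlgebraicIndepOn k id {e} := by
    rw [AlgebraicIndepOn, algebraicIndependent_unique_type_iff]
    exact mt IsAlgebraic.isIntegral hint
  obtain ⟨t, het, ht⟩ := exists_isTranscendenceBasis_superset htrans
  obtain ⟨E, hE⟩ := exists_derivation_of_isTranscendenceBasis ht fun _ => 1
  have hEe : E e = 1 := hE ⟨e, het rfl⟩
  have hsum (a) : (∑ i, E (x i) • D i : Derivation k K K) a = ∑ i, E (x i) * D i a :=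
    (congrFun (map_sum (Derivation.coeFnAddMonoidHom (R := k) (A := K) (M := K)) _ _) a).trans
      (Finset.sum_apply _ _ _)
  have hE' : E = ∑ i, E (x i) • D i :=
    derivation_ext_of_isTranscendenceBasis hx fun j => by simp [hsum, hD, Pi.single_apply]
  rw [hE', hsum] at hEe
  simp [he] at hEe

end TranscendenceBasis

section Homogenize

variable {R S σ : Type*} [CommRing R] [CommRing S] [Algebra R S]

theorem aeval_smul_of_isHomogeneous {n : ℕ} {p : MvPolynomial σ R} (hp : p.IsHomogeneous n) (c : S)
    (P : σ → S) : aeval (c • P) p = c ^ n * aeval P p := by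
  simp only [aeval_def, eval₂_eq, Finset.mul_sum]
  refine Finset.sum_congr rfl fun m hm => ?_
  have hmn : ∑ i ∈ m.support, m i = n := (hp.degree_eq_sum_deg_support hm).symm
  simp only [Pi.smul_apply, smul_eq_mul, mul_pow, Finset.prod_mul_distrib,
    Finset.prod_pow_eq_pow_sum, hmn]
  ring

/-- The homogenization `∑ n, X j ^ (N - n) * p_n` of degree `N` of a polynomial `p` with
homogeneous components `p_n`; it is meant for `N ≥ deg p` and `p` not involving `X j`. -/
noncomputable def homogenization (j : σ) (N : ℕ) (p : MvPolynomial σ R) : MvPolynomial σ R :=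
  ∑ n ∈ Finset.range (N + 1), X j ^ (N - n) * homogeneousComponent n p

theorem isHomogeneous_homogenization (j : σ) (N : ℕ) (p : MvPolynomial σ R) :
    (homogenization j N p).IsHomogeneous N := by
  refine IsHomogeneous.sum _ _ _ fun n hn => ?_
  have h := (isHomogeneous_X_pow (R := R) j (N - n)).mul (homogeneousComponent_isHomogeneous n p)
  rwa [Nat.sub_add_cancel (Finset.mem_range_succ_iff.mp hn)] at h

theorem aeval_homogenization {j : σ} {N : ℕ} {p : MvPolynomial σ R} (hN : p.totalDegree ≤ N)
    {P : σ → S} (hP : P j = 1) : aeval P (homogenization j N p) = aeval P p := by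
  have hsum : ∑ n ∈ Finset.range (N + 1), homogeneousComponent n p = p := by
    conv_rhs => rw [← sum_homogeneousComponent p]
    refine (Finset.sum_subset (Finset.range_subset_range.mpr (by omega)) fun n _ hn => ?_).symm
    exact homogeneousComponent_eq_zero _ _ (by simpa using hn)
  conv_rhs => rw [← hsum]
  simp [homogenization, hP]

theorem homogenization_ne_zero {j : σ} {N : ℕ} {p : MvPolynomial σ R} (hN : p.totalDegree ≤ N)
    (hj : j ∉ p.vars) (hp : p ≠ 0) : homogenization j N p ≠ 0 := by
  classical
  intro h
  have heval := aeval_homogenization (j := j) hN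
    (P := Function.update X j (1 : MvPolynomial σ R)) (Function.update_self ..)
  rw [h, map_zero] at heval
  refine hp (heval.trans ?_).symm
  conv_rhs => rw [← aeval_X_left_apply p]
  refine eval₂Hom_congr' rfl (fun i hi _ => ?_) rfl
  exact Function.update_of_ne (ne_of_mem_of_not_mem hi hj) _ _

theorem notMem_vars_homogenization [Nontrivial R] {i j : σ} {p : MvPolynomial σ R} (hij : i ≠ j)
    (hi : i ∉ p.vars) (N : ℕ) : i ∉ (homogenization j N p).vars := by
  classical
  intro h
  obtain ⟨n, -, hn⟩ := Finset.mem_biUnion.mp (vars_sum_subset _ _ h)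
  rcases Finset.mem_union.mp (vars_mul _ _ hn) with hX | hp
  · exact hij (by simpa using vars_pow _ _ hX)
  · obtain ⟨m, hm, him⟩ := (mem_vars_iff_mem_support i).mp hp
    refine hi ((mem_vars_iff_mem_support i).mpr ⟨m, ?_, him⟩)
    rw [support_homogeneousComponent] at hm
    exact (Finset.mem_filter.mp hm).1

end Homogenize

theorem vars_subset_vars_of_dvd {R σ : Type*} [CommRing R] [IsDomain R] {p q : MvPolynomial σ R}
    (hpq : p ∣ q) (hq : q ≠ 0) : p.vars ⊆ q.vars := by
  obtain ⟨r, rfl⟩ := hpq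
  intro i hi
  rw [mem_vars_iff_degreeOf_ne_zero] at hi ⊢
  rw [degreeOf_mul_eq (left_ne_zero_of_mul hq) (right_ne_zero_of_mul hq)]
  omega

section GenericZero

variable {k R σ : Type*} [Field k] [CommRing R] [Algebra k R] {d : ℕ} {F : MvPolynomial σ k}
  {P : σ → R}

/-- `P` is a generic point of the projective hypersurface `F = 0` over the field `k`: the forms over
`k` vanishing at `P` are exactly the multiples of `F`. -/
def IsGenericZero (F : MvPolynomial σ k) (P : σ → R) : Prop :=
  ∀ ⦃n : ℕ⦄ ⦃H : MvPolynomial σ k⦄, H.IsHomogeneous n → (aeval P H = 0 ↔ F ∣ H)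

theorem not_dvd_of_isHomogeneous_of_lt {n : ℕ} {H : MvPolynomial σ k} (hF : F.IsHomogeneous d)
    (hF0 : F ≠ 0) (hH : H.IsHomogeneous n) (hH0 : H ≠ 0) (hnd : n < d) : ¬ F ∣ H := fun h => by
  have := totalDegree_le_of_dvd_of_isDomain h hH0
  rw [hF.totalDegree hF0, hH.totalDegree hH0] at this
  omega

theorem IsGenericZero.aeval_ne_zero_of_not_dvd_homogenization (hP : IsGenericZero F P) {j : σ}
    (hj : P j = 1) {G : MvPolynomial σ k} (hG : ¬ F ∣ homogenization j G.totalDegree G) :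
    aeval P G ≠ 0 := fun h => by
  rw [← aeval_homogenization le_rfl hj, hP (isHomogeneous_homogenization _ _ _)] at h
  exact hG h

theorem IsGenericZero.aeval_ne_zero_of_totalDegree_lt (hP : IsGenericZero F P)
    (hF : F.IsHomogeneous d) (hF0 : F ≠ 0) {j : σ} (hj : P j = 1) {G : MvPolynomial σ k}
    (hG0 : G ≠ 0) (hjG : j ∉ G.vars) (hG : G.totalDegree < d) : aeval P G ≠ 0 :=
  hP.aeval_ne_zero_of_not_dvd_homogenization hj <|
    not_dvd_of_isHomogeneous_of_lt hF hF0 (isHomogeneous_homogenization _ _ _)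
      (homogenization_ne_zero le_rfl hjG hG0) hG

theorem IsGenericZero.aeval_ne_zero_of_notMem_vars (hP : IsGenericZero F P) {i j : σ} (hij : i ≠ j)
    (hiF : i ∈ F.vars) (hj : P j = 1) {G : MvPolynomial σ k} (hG0 : G ≠ 0) (hiG : i ∉ G.vars)
    (hjG : j ∉ G.vars) : aeval P G ≠ 0 :=
  hP.aeval_ne_zero_of_not_dvd_homogenization hj fun h =>
    notMem_vars_homogenization hij hiG _
      (vars_subset_vars_of_dvd h (homogenization_ne_zero le_rfl hjG hG0) hiF)

theorem IsGenericZero.aeval_pderiv_ne_zero (hP : IsGenericZero F P) (hF : F.IsHomogeneous d)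
    (hd : d ≠ 0) {i : σ} (hi : pderiv i F ≠ 0) : aeval P (pderiv i F) ≠ 0 := fun h =>
  not_dvd_of_isHomogeneous_of_lt hF (fun h0 => hi (by rw [h0, map_zero])) hF.pderiv hi (by omega)
    ((hP hF.pderiv).mp h)

end GenericZero

section GenericPoint

universe u v

variable {k : Type u} {σ : Type v} [Field k] {d : ℕ} {F : MvPolynomial σ k}

-- The point `x / x j`, where `x` is the tautological zero of `F` modulo `F`.
theorem exists_isGenericZero_fractionRing (hF : Irreducible F) {j : σ} (hj : ¬ F ∣ X j) :
    ∃ (L : Type (max u v)) (_ : Field L) (_ : Algebra k L) (P : σ → L),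
      P j = 1 ∧ IsGenericZero F P := by
  let I : Ideal (MvPolynomial σ k) := Ideal.span {F}
  have : I.IsPrime := (Ideal.span_singleton_prime hF.ne_zero).mpr hF.prime
  let L := FractionRing (MvPolynomial σ k ⧸ I)
  let x : σ → L := fun i => algebraMap (MvPolynomial σ k ⧸ I) L (Ideal.Quotient.mk I (X i))
  have hx (H) : aeval x H = algebraMap (MvPolynomial σ k ⧸ I) L (Ideal.Quotient.mk I H) := by
    have h := comp_aeval_apply X
      ((IsScalarTower.toAlgHom k (MvPolynomial σ k ⧸ I) L).comp (Ideal.Quotient.mkₐ k I)) H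
    rw [aeval_X_left_apply] at h
    exact h.symm
  have hx0 (H) : aeval x H = 0 ↔ F ∣ H := by
    rw [hx, FaithfulSMul.algebraMap_eq_zero_iff, Ideal.Quotient.eq_zero_iff_mem,
      Ideal.mem_span_singleton]
  have hxj : x j ≠ 0 := by rwa [← aeval_X (R := k) x j, Ne, hx0]
  refine ⟨L, inferInstance, inferInstance, (x j)⁻¹ • x, inv_mul_cancel₀ hxj, fun n H hH => ?_⟩
  rw [aeval_smul_of_isHomogeneous hH, mul_eq_zero_iff_left (pow_ne_zero _ (inv_ne_zero hxj)), hx0]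

theorem IsGenericZero.map_of_injective {R S : Type*} [CommRing R] [CommRing S] [Algebra k R]
    [Algebra k S] {P : σ → R} (hP : IsGenericZero F P) {φ : R →ₐ[k] S}
    (hφ : Function.Injective φ) : IsGenericZero F fun i => φ (P i) := fun n H hH => by
  rw [← comp_aeval_apply, map_eq_zero_iff φ hφ, hP hH]

theorem isAlgebraic_of_aeval_pderiv_ne_zero {R : Type*} [CommRing R] [Algebra k R] [Finite σ]
    (A : Subalgebra k R) {P : σ → R} (hF : aeval P F = 0) {i : σ} (hi : aeval P (pderiv i F) ≠ 0)
    (hA : ∀ m ≠ i, P m ∈ A) : IsAlgebraic A (P i) := by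
  classical
  cases nonempty_fintype σ
  let Y (m : σ) : Polynomial A := if h : m = i then Polynomial.X else Polynomial.C ⟨P m, hA m h⟩
  have hY (m) : Polynomial.aeval (P i) (Y m) = P m := by
    by_cases h : m = i
    · simp [Y, h]
    · simp [Y, h]
  have haeval (G : MvPolynomial σ k) : Polynomial.aeval (P i) (aeval Y G) = aeval P G := by
    rw [← AlgHom.coe_restrictScalars' k, comp_aeval_apply]
    simp [hY]
  refine ⟨aeval Y F, fun h => hi ?_, by rw [haeval, hF]⟩
  have hderiv := derivation_aeval ((Polynomial.derivative' (R := A)).restrictScalars k) Y F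
  rw [h, map_zero, Finset.sum_eq_single_of_mem i (Finset.mem_univ i)
    fun m _ hm => by simp [Y, hm]] at hderiv
  simpa [Y, haeval] using congrArg (Polynomial.aeval (P i)) hderiv.symm

section AffineCoordinates

variable {ι R : Type*} [CommRing R] [Algebra k R] {P : σ → R} {e : Option (Option ι) ≃ σ}

theorem IsGenericZero.algebraicIndependent (hP : IsGenericZero F P) (hP1 : P (e none) = 1)
    (hi : pderiv (e (some none)) F ≠ 0) :
    AlgebraicIndependent k fun i => P (e (some (some i))) := by
  refine algebraicIndependent_iff.mpr fun G hG => by_contra fun hG0 => ?_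
  have hvars {o} (ho : ∀ i, o ≠ some (some i)) :
      e o ∉ (rename (fun i => e (some (some i))) G).vars := fun h =>
    let ⟨i, _, hi⟩ := mem_vars_rename _ _ h
    ho i (e.injective hi.symm)
  have hFvars : e (some none) ∈ F.vars :=
    by_contra fun h => hi (pderiv_eq_zero_of_notMem_vars h)
  refine hP.aeval_ne_zero_of_notMem_vars (e.injective.ne (by simp)) hFvars hP1 ?_
    (hvars (o := some none) (by simp)) (hvars (o := none) (by simp)) (by rwa [aeval_rename])
  exact (map_ne_zero_iff _ (rename_injective _ fun i i' h => by simpa using h)).mpr hG0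

theorem IsGenericZero.isTranscendenceBasis [IsDomain R] [Finite σ] (hP : IsGenericZero F P)
    (hF : F.IsHomogeneous d) (hd : d ≠ 0) (hP1 : P (e none) = 1)
    (hi : pderiv (e (some none)) F ≠ 0) (hgen : Algebra.adjoin k (Set.range P) = ⊤) :
    IsTranscendenceBasis k fun i => P (e (some (some i))) := by
  refine (hP.algebraicIndependent hP1 hi).isTranscendenceBasis_iff_isAlgebraic.mpr ⟨fun a => ?_⟩
  refine IsAlgebraic.adjoin_of_forall_isAlgebraic (s := Set.range P) ?_ ?_
  · rintro _ ⟨⟨m, rfl⟩, hm⟩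
    obtain ⟨_ | _ | i, rfl⟩ := e.surjective m
    · rw [hP1]
      exact isAlgebraic_one
    · refine isAlgebraic_of_aeval_pderiv_ne_zero _ ((hP hF).mpr dvd_rfl)
        (hP.aeval_pderiv_ne_zero hF hd hi) fun m hm => ?_
      obtain ⟨_ | _ | i, rfl⟩ := e.surjective m
      · rw [hP1]
        exact one_mem _
      · exact absurd rfl hm
      · exact Algebra.subset_adjoin ⟨i, rfl⟩
    · exact absurd ⟨i, rfl⟩ hm
  · rw [hgen]
    exact isAlgebraic_algebraMap (⟨a, trivial⟩ : (⊤ : Subalgebra k R))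

end AffineCoordinates

end GenericPoint

section GenericPointAlgClosure

universe u v

variable {k : Type u} {σ : Type v} {ι : Type*} [Field k] {d : ℕ} {F : MvPolynomial σ k}

theorem exists_isGenericZero_isTranscendenceBasis [Finite σ] (e : Option (Option ι) ≃ σ)
    (hirr : Irreducible F) (hF : F.IsHomogeneous d) (hd : 2 ≤ d)
    (hi : pderiv (e (some none)) F ≠ 0) :
    ∃ (K : Type (max u v)) (_ : Field K) (_ : Algebra k K) (_ : IsAlgClosed K) (P : σ → K),
      P (e none) = 1 ∧ IsGenericZero F P ∧
        IsTranscendenceBasis k fun i => P (e (some (some i))) := by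
  obtain ⟨L, _, _, P, hP1, hP⟩ := exists_isGenericZero_fractionRing hirr (j := e none)
    (not_dvd_of_isHomogeneous_of_lt hF hirr.ne_zero (isHomogeneous_X k _) (X_ne_zero _) hd)
  let S := Algebra.adjoin k (Set.range P)
  let K := AlgebraicClosure (FractionRing S)
  have : Algebra.IsAlgebraic S K :=
    (IsFractionRing.comap_isAlgebraic_iff (K := FractionRing S)).mpr inferInstance
  have : FaithfulSMul S K := .trans S (FractionRing S) K
  let Q (i : σ) : S := ⟨P i, Algebra.subset_adjoin (Set.mem_range_self i)⟩
  have hQ1 : Q (e none) = 1 := Subtype.ext hP1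
  have hQ : IsGenericZero F Q := fun n H hH => by
    rw [← hP hH, ← ZeroMemClass.coe_eq_zero, ← S.val_apply, comp_aeval_apply]
    rfl
  have hgen : Algebra.adjoin k (Set.range Q) = ⊤ := by
    convert Algebra.adjoin_adjoin_coe_preimage (R := k) (s := Set.range P)
    ext a
    simp [Q, Subtype.ext_iff]
  refine ⟨K, inferInstance, inferInstance, inferInstance, fun i => algebraMap S K (Q i),
    (congrArg _ hQ1).trans (map_one _),
    hQ.map_of_injective (φ := IsScalarTower.toAlgHom k S K) (FaithfulSMul.algebraMap_injective S K),
    (hQ.isTranscendenceBasis hF (by omega) hQ1 hi hgen).algebraMap_comp⟩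

end GenericPointAlgClosure

section Frame

variable {k σ ι K : Type*} [Field k] [Field K] [Algebra k K] [DecidableEq ι]

/-- `P` is a generic point over `k` of the projective hypersurface `F = 0` with coordinate `e none`
normalized to `1`, and the `D i` are the partial derivatives with respect to its affine coordinates
of index `e (some (some i))`; the remaining coordinate, of index `e (some none)`, is to be thought
of as a function of these. -/
structure IsFramedGenericPoint (F : MvPolynomial σ k) (e : Option (Option ι) ≃ σ) (P : σ → K)
    (D : ι → Derivation k K K) : Prop where
  apply_none : P (e none) = 1
  isGenericZero : IsGenericZero F P
  derivation_comm : ∀ i j a, D i (D j a) = D j (D i a)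
  mem_range_algebraMap : ∀ a, (∀ i, D i a = 0) → a ∈ (algebraMap k K).range
  derivation_apply_some_some :
    ∀ i j, D i (P (e (some (some j)))) = Pi.single (M := fun _ => K) i 1 j

universe u v in
theorem exists_isFramedGenericPoint {k : Type u} {σ : Type v} [Field k] [IsAlgClosed k] [CharZero k]
    [Finite σ] {d : ℕ} {F : MvPolynomial σ k} {e : Option (Option ι) ≃ σ}
    (hirr : Irreducible F) (hF : F.IsHomogeneous d) (hd : 2 ≤ d)
    (hi : pderiv (e (some none)) F ≠ 0) :
    ∃ (K : Type (max u v)) (_ : Field K) (_ : Algebra k K) (_ : IsAlgClosed K) (P : σ → K)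
      (D : ι → Derivation k K K), IsFramedGenericPoint F e P D := by
  have : Finite ι := .of_injective (fun i => e (some (some i))) fun i j h => by simpa using h
  obtain ⟨K, _, _, _, P, hP1, hP, hbasis⟩ :=
    exists_isGenericZero_isTranscendenceBasis e hirr hF hd hi
  choose D hD using fun i => exists_derivation_of_isTranscendenceBasis hbasis
    (Pi.single (M := fun _ => K) i 1)
  exact ⟨K, inferInstance, inferInstance, inferInstance, P, D, hP1, hP,
    derivation_comm_of_isTranscendenceBasis hbasis hD,
    fun _ => mem_range_algebraMap_of_derivation_eq_zero hbasis hD, hD⟩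

namespace IsFramedGenericPoint

variable {d : ℕ} {F : MvPolynomial σ k}

section General

variable {e : Option (Option ι) ≃ σ} {P : σ → K} {D : ι → Derivation k K K}
  (hP : IsFramedGenericPoint F e P D)

include hP

theorem hessian_eq_zero {m : σ} (hm : m ≠ e (some none)) : hessian D (P m) = 0 := by
  ext i j
  obtain ⟨_ | _ | l, rfl⟩ := e.surjective m
  · simp [hessian, hP.apply_none]
  · exact absurd rfl hm
  · rcases eq_or_ne l j with rfl | hlj
    · simp [hessian, hP.derivation_apply_some_some]
    · simp [hessian, hP.derivation_apply_some_some, hlj]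

theorem aeval_ne_zero_of_totalDegree_lt (hF : F.IsHomogeneous d) (hF0 : F ≠ 0)
    {G : MvPolynomial (Option ι) k} (hG0 : G ≠ 0) (hG : G.totalDegree < d) :
    aeval (fun o => P (e (some o))) G ≠ 0 := by
  have h := hP.isGenericZero.aeval_ne_zero_of_totalDegree_lt hF hF0 hP.apply_none
    (G := rename (fun o => e (some o)) G)
    ((map_ne_zero_iff _ (rename_injective _ fun o o' h => by simpa using h)).mpr hG0)
    (fun h => by
      obtain ⟨o, _, ho⟩ := mem_vars_rename _ _ h
      simp at ho)
    ((totalDegree_rename_le _ _).trans_lt hG)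
  rwa [aeval_rename] at h

variable [Fintype ι]

theorem constantCoeff_affinePullback_pderiv_ne_zero (hF : F.IsHomogeneous d) (hd : d ≠ 0)
    (hi : pderiv (e (some none)) F ≠ 0) :
    constantCoeff (affinePullback (pderiv (e (some none)) F) P fun j m => D j (P m)) ≠ 0 := by
  rw [constantCoeff_affinePullback]
  exact hP.isGenericZero.aeval_pderiv_ne_zero hF hd hi

variable [Finite σ]

theorem comovingDeriv_affinePullback (i : ι) :
    comovingDeriv D i (affinePullback F P fun j m => D j (P m)) =
      affinePullback (pderiv (e (some none)) F) P (fun j m => D j (P m)) *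
        linForm (hessian D (P (e (some none))) i) :=
  comovingDeriv_affinePullback_tangent (fun _ => hP.hessian_eq_zero) F i

theorem singularAtOrigin_affinePullback (hF : F.IsHomogeneous d) :
    SingularAtOrigin (affinePullback F P fun j m => D j (P m)) := by
  have h0 : constantCoeff (affinePullback F P fun j m => D j (P m)) = 0 := by
    rw [constantCoeff_affinePullback, (hP.isGenericZero hF).mpr dvd_rfl]
  refine ⟨h0, fun i => ?_⟩
  have h := congrArg constantCoeff (hP.comovingDeriv_affinePullback i)
  rwa [constantCoeff_comovingDeriv, h0, map_zero, zero_sub, map_mul, constantCoeff_linForm,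
    mul_zero, neg_eq_zero] at h

theorem exists_constantCoeff_pderiv_pderiv_affinePullback_ne_zero (hF : F.IsHomogeneous d)
    (hd : d ≠ 0) (hi : pderiv (e (some none)) F ≠ 0) (hhess : hessian D (P (e (some none))) ≠ 0) :
    ∃ i j, constantCoeff (pderiv i (pderiv j (affinePullback F P fun j m => D j (P m)))) ≠ 0 := by
  contrapose! hhess
  ext i j
  have h := hhess i j
  rw [constantCoeff_pderiv_pderiv_eq_neg_hessian _ hP.comovingDeriv_affinePullback
    (hP.singularAtOrigin_affinePullback hF), neg_eq_zero] at h
  exact (mul_eq_zero.mp h).resolve_left (hP.constantCoeff_affinePullback_pderiv_ne_zero hF hd hi)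

end General

variable {e : Option (Option (Fin 2)) ≃ σ} {P : σ → K} {D : Fin 2 → Derivation k K K} [Finite σ]
  [CharZero K] (hP : IsFramedGenericPoint F e P D)

include hP

theorem det_hessian_ne_zero (hF : F.IsHomogeneous d)
    (hline : ∀ w : σ → K, w (e none) = 0 → w ≠ 0 → affinePullback F P (fun _ : Unit => w) ≠ 0) :
    (hessian D (P (e (some none)))).det ≠ 0 := fun hdet => by
  obtain ⟨w, hw, h⟩ := exists_affinePullback_eq_zero_of_det_hessian_eq_zero hP.derivation_comm
    (fun _ => hP.hessian_eq_zero) hdet ((hP.isGenericZero hF).mpr dvd_rfl)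
  refine hline _ (by simp [hP.apply_none]) (fun h0 => hw (funext fun l => ?_)) h
  simpa [hP.derivation_apply_some_some, Pi.single_apply] using congrFun h0 (e (some (some l)))

theorem not_dvd_affinePullback (hF : F.IsHomogeneous d) (hd : d ≠ 0)
    (hi : pderiv (e (some none)) F ≠ 0) (hdet : (hessian D (P (e (some none)))).det ≠ 0)
    {c : MvPolynomial (Fin 2) K} (hc : c.totalDegree < d) (hsing : SingularAtOrigin c) :
    ¬ c ∣ affinePullback F P fun j m => D j (P m) := fun hdvd => by
  obtain ⟨G, hG0, hG, hGP⟩ := exists_aeval_eq_zero_of_singular_factor hP.derivation_comm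
    hP.mem_range_algebraMap hP.derivation_apply_some_some hdet hP.comovingDeriv_affinePullback
    (hP.constantCoeff_affinePullback_pderiv_ne_zero hF hd hi) hdvd hsing
  refine hP.aeval_ne_zero_of_totalDegree_lt hF (fun h => hi (by rw [h, map_zero])) hG0
    (hG.trans_lt hc) ?_
  convert hGP using 3
  ext o
  cases o <;> rfl

end IsFramedGenericPoint

end Frame

section Specialization

open TensorProduct in
theorem nonempty_algHom_of_isAlgClosed (A Q K : Type*) [CommRing A] [IsDomain A] [CommRing Q]
    [Algebra A Q] [FaithfulSMul A Q] [Algebra.FiniteType A Q] [Field K] [IsAlgClosed K]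
    [Algebra A K] [FaithfulSMul A K] : Nonempty (Q →ₐ[A] K) := by
  let := FractionRing.liftAlgebra A K
  have : Module.Flat A K := .trans A (FractionRing A) K
  have : Nontrivial (K ⊗[A] Q) :=
    Algebra.TensorProduct.nontrivial_of_algebraMap_injective_of_flat_left _ _ _
      (FaithfulSMul.algebraMap_injective A Q)
  obtain ⟨m, hm⟩ := Ideal.exists_maximal (K ⊗[A] Q)
  let := Ideal.Quotient.field m
  have := finite_of_finite_type_of_isJacobsonRing K (K ⊗[A] Q ⧸ m)
  let e := AlgEquiv.ofBijective (Algebra.ofId K (K ⊗[A] Q ⧸ m))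
    IsAlgClosed.algebraMap_bijective_of_isIntegral
  exact ⟨((e.symm.toAlgHom.comp (Ideal.Quotient.mkₐ K m)).restrictScalars A).comp
    Algebra.TensorProduct.includeRight⟩

theorem exists_algHom_apply_ne_zero {k A : Type*} [Field k] [IsAlgClosed k] [CommRing A]
    [IsDomain A] [Algebra k A] [Algebra.FiniteType k A] {a : A} (ha : a ≠ 0) :
    ∃ θ : A →ₐ[k] k, θ a ≠ 0 := by
  have : IsDomain (Localization.Away a) :=
    IsLocalization.isDomain_localization (powers_le_nonZeroDivisors_of_noZeroDivisors ha)
  have : Algebra.FiniteType k (Localization.Away a) :=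
    .trans (S := A) ‹_› (IsLocalization.finiteType_of_monoid_fg (Submonoid.powers a) _)
  obtain ⟨θ⟩ := nonempty_algHom_of_isAlgClosed k (Localization.Away a) k
  exact ⟨θ.comp (IsScalarTower.toAlgHom k A _),
    ((IsLocalization.Away.algebraMap_isUnit a).map θ).ne_zero⟩

theorem exists_C_mem_of_forall_exists_aeval_ne_zero {A K ι : Type*} [CommRing A] [IsDomain A]
    [Field K] [IsAlgClosed K] [Algebra A K] [FaithfulSMul A K] [Finite ι]
    {J : Ideal (MvPolynomial ι A)} (hJ : ∀ v : ι → K, ∃ f ∈ J, aeval v f ≠ 0) :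
    ∃ a : A, a ≠ 0 ∧ C a ∈ J := by
  by_contra! h
  have : FaithfulSMul A (MvPolynomial ι A ⧸ J) := by
    refine (faithfulSMul_iff_algebraMap_injective _ _).mpr
      ((injective_iff_map_eq_zero (algebraMap A (MvPolynomial ι A ⧸ J))).mpr ?_)
    exact fun a ha => by_contra fun ha0 => h a ha0 (Ideal.Quotient.eq_zero_iff_mem.mp ha)
  obtain ⟨θ⟩ := nonempty_algHom_of_isAlgClosed A (MvPolynomial ι A ⧸ J) K
  obtain ⟨f, hf, hne⟩ := hJ fun i => θ (Ideal.Quotient.mkₐ A J (X i))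
  refine hne ?_
  rw [← comp_aeval_apply, ← comp_aeval_apply, aeval_X_left_apply, Ideal.Quotient.mkₐ_eq_mk,
    Ideal.Quotient.eq_zero_iff_mem.mpr hf, map_zero]

theorem exists_eq_sum_monomial_of_mem_restrictSupport {R τ : Type*} [CommSemiring R]
    {s : Set (τ →₀ ℕ)} [Fintype s] {c : MvPolynomial τ R} (hc : c ∈ restrictSupport R s) :
    c = ∑ m : s, monomial m.1 (coeff m.1 c) := by
  classical
  ext n
  simp only [coeff_sum, coeff_monomial]
  by_cases hn : n ∈ s
  · rw [Finset.sum_eq_single_of_mem ⟨n, hn⟩ (Finset.mem_univ _) fun m _ hm =>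
      if_neg fun h => hm (Subtype.ext h), if_pos rfl]
  · rw [Finset.sum_eq_zero fun m _ => if_neg (ne_of_mem_of_not_mem m.2 hn)]
    exact notMem_support_iff.mp fun h => hn ((mem_restrictSupport_iff _).mp hc h)

section Factorization

variable {A B τ : Type*} [CommRing A] [CommRing B]

/-- The difference between `p` and the product of two polynomials with indeterminate coefficients
and with supports in `s` and in `t`. Its coefficients are the equations in the coefficients of `c`
and `g` for a factorization `c * g = p` with such supports. -/
noncomputable def genericFactorization (s t : Set (τ →₀ ℕ)) [Fintype s] [Fintype t]
    (p : MvPolynomial τ A) : MvPolynomial τ (MvPolynomial (s ⊕ t) A) :=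
  (∑ m : s, monomial m.1 (X (.inl m))) * (∑ m : t, monomial m.1 (X (.inr m))) - map C p

theorem map_genericFactorization {s t : Set (τ →₀ ℕ)} [Fintype s] [Fintype t] (θ : A →+* B)
    (p : MvPolynomial τ A) (v : s ⊕ t → B) :
    map (eval₂Hom θ v) (genericFactorization s t p) =
      (∑ m : s, monomial m.1 (v (.inl m))) * (∑ m : t, monomial m.1 (v (.inr m))) - map θ p := by
  simp only [genericFactorization, map_sub, map_mul, map_sum, map_monomial, map_map, coe_eval₂Hom,
    eval₂_X]
  congr 3
  ext
  simp

theorem exists_ne_zero_forall_mul_ne_map {K L : Type*} [IsDomain A] [Field K]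
    [IsAlgClosed K] [Algebra A K] [FaithfulSMul A K] [CommRing L] {s t : Set (τ →₀ ℕ)}
    (hs : s.Finite) (ht : t.Finite) (p : MvPolynomial τ A)
    (hp : ∀ c ∈ restrictSupport K s, ∀ g ∈ restrictSupport K t, c * g ≠ map (algebraMap A K) p) :
    ∃ a : A, a ≠ 0 ∧ ∀ θ : A →+* L, θ a ≠ 0 →
      ∀ c ∈ restrictSupport L s, ∀ g ∈ restrictSupport L t, c * g ≠ map θ p := by
  have := hs.fintype
  have := ht.fintype
  let U := genericFactorization s t p
  obtain ⟨a, ha0, ha⟩ := exists_C_mem_of_forall_exists_aeval_ne_zero (K := K)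
    (J := Ideal.span (Set.range fun n => coeff n U)) fun v => by
      by_contra! h
      refine hp (∑ m : s, monomial m.1 (v (.inl m))) (Submodule.sum_mem _ fun m _ => ?_)
        (∑ m : t, monomial m.1 (v (.inr m))) (Submodule.sum_mem _ fun m _ => ?_) ?_
      · exact (monomial_mem_restrictSupport _).mpr (.inl m.2)
      · exact (monomial_mem_restrictSupport _).mpr (.inl m.2)
      · rw [← sub_eq_zero, ← map_genericFactorization]
        ext n
        rw [coeff_map]
        exact h _ (Ideal.subset_span ⟨n, rfl⟩)
  refine ⟨a, ha0, fun θ hθ c hc g hg hcg => hθ ?_⟩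
  let v : s ⊕ t → L := Sum.elim (fun m => coeff m.1 c) fun m => coeff m.1 g
  have hU : map (eval₂Hom θ v) U = 0 := by
    rw [map_genericFactorization, sub_eq_zero]
    exact (congrArg₂ (· * ·) (exists_eq_sum_monomial_of_mem_restrictSupport hc)
      (exists_eq_sum_monomial_of_mem_restrictSupport hg)).symm.trans hcg
  have hle : Ideal.span (Set.range fun n => coeff n U) ≤ RingHom.ker (eval₂Hom θ v) := by
    rw [Ideal.span_le]
    rintro _ ⟨n, rfl⟩
    exact (coeff_map _ _ _).symm.trans (by rw [hU, coeff_zero])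
  simpa using hle ha

end Factorization

end Specialization

theorem singularAtOrigin_iff_two_le_degree {R σ : Type*} [CommRing R] {p : MvPolynomial σ R} :
    SingularAtOrigin p ↔ ∀ m ∈ p.support, 2 ≤ m.degree := by
  have hcoeff (i) : constantCoeff (pderiv i p) = coeff (Finsupp.single i 1) p := by
    simp [constantCoeff_eq, coeff_pderiv]
  simp only [SingularAtOrigin, hcoeff, constantCoeff_eq]
  constructor
  · rintro ⟨h0, h1⟩ m hm
    by_contra! hlt
    obtain h | h : m.degree = 0 ∨ m.degree = 1 := by omega
    · rw [m.degree_eq_zero_iff.mp h] at hm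
      exact mem_support_iff.mp hm h0
    · obtain ⟨i, rfl⟩ := Finsupp.range_single_one.superset h
      exact mem_support_iff.mp hm (h1 i)
  · exact fun h => ⟨by_contra fun h0 => by simpa using h 0 (mem_support_iff.mpr h0),
      fun i => by_contra fun h1 => by simpa using h _ (mem_support_iff.mpr h1)⟩

theorem SingularAtOrigin.map {R S σ : Type*} [CommRing R] [CommRing S] {p : MvPolynomial σ R}
    (hp : SingularAtOrigin p) (φ : R →+* S) : SingularAtOrigin (map φ p) := by
  simp [SingularAtOrigin, pderiv_map, hp.1, hp.2, constantCoeff_map]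

theorem SingularAtOrigin.of_map {R S σ : Type*} [CommRing R] [CommRing S] {p : MvPolynomial σ R}
    {φ : R →+* S} (hφ : Function.Injective φ) (hp : SingularAtOrigin (MvPolynomial.map φ p)) :
    SingularAtOrigin p := by
  simpa [SingularAtOrigin, pderiv_map, constantCoeff_map, map_eq_zero_iff φ hφ] using hp

theorem exists_ne_zero_forall_not_dvd_map {A K L τ : Type*} [CommRing A] [IsDomain A] [Field K]
    [IsAlgClosed K] [Algebra A K] [FaithfulSMul A K] [CommRing L] [IsDomain L] [Finite τ] {d : ℕ}
    {p : MvPolynomial τ A} (hp : ∀ c : MvPolynomial τ K, c.totalDegree < d → SingularAtOrigin c →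
      ¬ c ∣ map (algebraMap A K) p) :
    ∃ a : A, a ≠ 0 ∧ ∀ θ : A →+* L, θ a ≠ 0 → ∀ c : MvPolynomial τ L, c.totalDegree < d →
      SingularAtOrigin c → ¬ c ∣ map θ p := by
  rcases Nat.eq_zero_or_pos d with rfl | hd
  · exact ⟨1, one_ne_zero, fun _ _ _ hc => absurd hc (Nat.not_lt_zero _)⟩
  have hs : {m : τ →₀ ℕ | 2 ≤ m.degree ∧ m.degree < d}.Finite :=
    (Finsupp.finite_of_degree_lt d).subset fun m hm => hm.2
  obtain ⟨a, ha0, ha⟩ := exists_ne_zero_forall_mul_ne_map (K := K) (L := L) hs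
    (Finsupp.finite_of_degree_le p.totalDegree) p fun c hc g _ hcg => by
      have hc' (m) (hm : m ∈ c.support) := (mem_restrictSupport_iff _).mp hc hm
      refine hp c ?_ (singularAtOrigin_iff_two_le_degree.mpr fun m hm => (hc' m hm).1)
        (Dvd.intro g hcg)
      exact (Finset.sup_lt_iff hd).mpr fun m hm => (hc' m hm).2
  refine ⟨a, ha0, fun θ hθ c hcd hc => ?_⟩
  have hne : map θ p ≠ 0 := fun h => ha θ hθ 0 (zero_mem _) 0 (zero_mem _) (by rw [h, zero_mul])
  rintro ⟨g, hcg⟩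
  refine ha θ hθ c ?_ g ?_ hcg.symm
  · exact (mem_restrictSupport_iff _).mpr fun m hm =>
      ⟨singularAtOrigin_iff_two_le_degree.mp hc m hm, (le_totalDegree hm).trans_lt hcd⟩
  · have hg := (totalDegree_le_of_dvd_of_isDomain (Dvd.intro_left c hcg.symm) hne).trans
      (Finset.sup_mono (support_map_subset θ p))
    exact (mem_restrictSupport_iff _).mpr fun m hm => (le_totalDegree hm).trans hg

section TangentFrame

variable {k R K σ τ : Type*} [Field k] [CommRing R] [Algebra k R] [Field K] [Algebra k K]

theorem exists_subalgebra_finiteType_lift [Finite σ] [Finite τ] (P : σ → K) (V : τ → σ → K) :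
    ∃ A : Subalgebra k K, Algebra.FiniteType k A ∧ ∃ (Q : σ → A) (W : τ → σ → A),
      (fun i => A.val (Q i)) = P ∧ (fun j i => A.val (W j i)) = V := by
  let x : Option τ × σ → K := fun ji => ji.1.elim P V ji.2
  have hx (ji) : x ji ∈ Algebra.adjoin k (Set.range x) := Algebra.subset_adjoin ⟨ji, rfl⟩
  refine ⟨Algebra.adjoin k (Set.range x), ?_, fun i => ⟨P i, hx (none, i)⟩,
    fun j i => ⟨V j i, hx (some j, i)⟩, rfl, rfl⟩
  exact (Subalgebra.fg_iff_finiteType _).mp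
    (Subalgebra.fg_def.mpr ⟨_, Set.finite_range x, rfl⟩)

variable [Fintype τ] {F : MvPolynomial σ k}

theorem IsGenericZero.affinePullback_ne_zero [IsAlgClosed k] [Finite σ] {P : σ → K}
    (hP : IsGenericZero F P) {j : σ} (hPj : P j = 1) {n : ℕ} {H : MvPolynomial σ k}
    (hH : H.IsHomogeneous n) (hFH : ¬ F ∣ H)
    (hline : ∀ Q w : σ → k, Q j = 1 → w j = 0 → w ≠ 0 →
      affinePullback F Q (fun _ : Unit => w) = 0 → aeval Q H = 0)
    {w : σ → K} (hwj : w j = 0) (hw : w ≠ 0) : affinePullback F P (fun _ : Unit => w) ≠ 0 := by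
  intro h
  obtain ⟨m, hm⟩ := Function.ne_iff.mp hw
  obtain ⟨A, _, Q, W, rfl, hW⟩ := exists_subalgebra_finiteType_lift (k := k) P fun _ : Unit => w
  obtain rfl : (fun i => A.val (W () i)) = w := congrFun hW ()
  have hHQ : aeval Q H ≠ 0 := fun h0 => hFH ((hP hH).mp (by rw [← comp_aeval_apply, h0, map_zero]))
  obtain ⟨θ, hθ⟩ := exists_algHom_apply_ne_zero (k := k)
    (mul_ne_zero (fun h0 => hm (by simp [h0]) : W () m ≠ 0) hHQ)
  rw [map_mul, comp_aeval_apply] at hθ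
  refine right_ne_zero_of_mul hθ (hline _ (fun i => θ (W () i)) ?_ ?_ ?_ ?_)
  · rw [(Subtype.ext hPj : Q j = 1), map_one]
  · rw [(Subtype.ext hwj : W () j = 0), map_zero]
  · exact Function.ne_iff.mpr ⟨m, left_ne_zero_of_mul hθ⟩
  · have hA : affinePullback F Q (fun _ : Unit => W ()) = 0 :=
      map_injective _ Subtype.val_injective
        ((map_affinePullback F Q _ A.val).trans (h.trans (map_zero _).symm))
    rw [← map_affinePullback F Q (fun _ : Unit => W ()), hA, map_zero]

/-- The vectors `V j` span the tangent space at the smooth point `P` of the hypersurface `F = 0`,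
whose tangent section has a double point at `P` and has no component of smaller degree
singular at `P`. -/
structure IsDoublePointTangentFrame (F : MvPolynomial σ k) (P : σ → R) (V : τ → σ → R) : Prop where
  exists_aeval_pderiv_ne_zero : ∃ i, aeval P (pderiv i F) ≠ 0
  singularAtOrigin : SingularAtOrigin (affinePullback F P V)
  exists_constantCoeff_pderiv_pderiv_ne_zero :
    ∃ i j, constantCoeff (pderiv i (pderiv j (affinePullback F P V))) ≠ 0
  not_dvd : ∀ c : MvPolynomial τ R, c.totalDegree < F.totalDegree → SingularAtOrigin c →
    ¬ c ∣ affinePullback F P V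

theorem IsDoublePointTangentFrame.exists_specialization [IsAlgClosed k] [IsAlgClosed K] [Finite σ]
    {P : σ → K} {V : τ → σ → K} (h : IsDoublePointTangentFrame F P V) {H : MvPolynomial σ k}
    (hH : aeval P H ≠ 0) :
    ∃ (P : σ → k) (V : τ → σ → k), aeval P H ≠ 0 ∧ IsDoublePointTangentFrame F P V := by
  obtain ⟨A, _, Q, W, rfl, rfl⟩ := exists_subalgebra_finiteType_lift (k := k) P V
  obtain ⟨⟨m, hm⟩, hsing, ⟨i, j, hij⟩, hdvd⟩ := h
  rw [← map_affinePullback] at hsing hij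
  simp only [← map_affinePullback] at hdvd
  obtain ⟨a, ha, hspread⟩ := exists_ne_zero_forall_not_dvd_map (L := k) hdvd
  rw [← comp_aeval_apply, map_ne_zero_iff _ Subtype.val_injective] at hH hm
  rw [pderiv_map, pderiv_map, constantCoeff_map] at hij
  obtain ⟨θ, hθ⟩ := exists_algHom_apply_ne_zero (k := k)
    (mul_ne_zero (mul_ne_zero hH hm) (mul_ne_zero (ne_zero_of_map hij) ha))
  simp only [map_mul, mul_ne_zero_iff, comp_aeval_apply] at hθ
  obtain ⟨⟨hH, hm⟩, hij, ha⟩ := hθ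
  refine ⟨fun i => θ (Q i), fun j i => θ (W j i), hH, ⟨m, hm⟩, ?_, ⟨i, j, ?_⟩, ?_⟩
  · rw [← map_affinePullback]
    exact (hsing.of_map Subtype.val_injective).map _
  · rw [← map_affinePullback, pderiv_map, pderiv_map, constantCoeff_map]
    exact hij
  · rw [← map_affinePullback]
    exact hspread θ ha

theorem exists_isDoublePointTangentFrame [IsAlgClosed k] [CharZero k] [Finite σ]
    {e : Option (Option (Fin 2)) ≃ σ} (hirr : Irreducible F) {d : ℕ} (hF : F.IsHomogeneous d)
    (hd : 2 ≤ d) (hi : pderiv (e (some none)) F ≠ 0) {n : ℕ} {H : MvPolynomial σ k}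
    (hH : H.IsHomogeneous n) (hFH : ¬ F ∣ H)
    (hline : ∀ Q w : σ → k, Q (e none) = 1 → w (e none) = 0 → w ≠ 0 →
      affinePullback F Q (fun _ : Unit => w) = 0 → aeval Q H = 0) :
    ∃ (P : σ → k) (V : Fin 2 → σ → k), aeval P H ≠ 0 ∧ IsDoublePointTangentFrame F P V := by
  obtain ⟨K, _, _, _, P, D, hP⟩ := exists_isFramedGenericPoint hirr hF hd hi
  have := charZero_of_injective_algebraMap (algebraMap k K).injective
  have hd0 : d ≠ 0 := by omega
  have hdet := hP.det_hessian_ne_zero hF fun w =>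
    hP.isGenericZero.affinePullback_ne_zero hP.apply_none hH hFH hline
  have hhess : hessian D (P (e (some none))) ≠ 0 := fun h => hdet (by rw [h, Matrix.det_zero])
  refine IsDoublePointTangentFrame.exists_specialization (P := P) (V := fun j m => D j (P m))
    ⟨⟨_, hP.isGenericZero.aeval_pderiv_ne_zero hF hd0 hi⟩, hP.singularAtOrigin_affinePullback hF,
      hP.exists_constantCoeff_pderiv_pderiv_affinePullback_ne_zero hF hd0 hi hhess, ?_⟩
    ((hP.isGenericZero hH).not.mpr hFH)
  rw [hF.totalDegree hirr.ne_zero]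
  exact fun c hc hsing => hP.not_dvd_affinePullback hF hd0 hi hdet hc hsing

end TangentFrame

section AffineJets

variable {k R σ τ : Type*} [CommRing k] [CommRing R] [Algebra k R] [Fintype σ] [Fintype τ]
  (F : MvPolynomial σ k) (P : σ → R) (V : τ → σ → R)

theorem constantCoeff_pderiv_affinePullback (j : τ) :
    constantCoeff (pderiv j (affinePullback F P V)) = (fun i => aeval P (pderiv i F)) ⬝ᵥ V j := by
  simp [pderiv_affinePullback, constantCoeff_affinePullback, dotProduct]

theorem constantCoeff_pderiv_pderiv_affinePullback (i j : τ) :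
    constantCoeff (pderiv i (pderiv j (affinePullback F P V))) =
      ∑ m, (fun l => aeval P (pderiv l (pderiv m F))) ⬝ᵥ V i * V j m := by
  simp [pderiv_affinePullback, constantCoeff_affinePullback, dotProduct, mul_comm (V j _)]

end AffineJets

theorem pderiv_homogeneousComponent_succ {R σ : Type*} [CommSemiring R] (n : ℕ) (i : σ)
    (p : MvPolynomial σ R) :
    pderiv i (homogeneousComponent (n + 1) p) = homogeneousComponent n (pderiv i p) := by
  classical
  ext m
  simp [coeff_pderiv, coeff_homogeneousComponent]

section Line

variable {k σ : Type*} [Field k] [Infinite k] {d : ℕ} {F : MvPolynomial σ k}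

theorem eval_eq_zero_of_mem_span_pair (hF : F.IsHomogeneous d) {P W x : σ → k}
    (h : affinePullback F P (fun _ : Unit => W) = 0) (hx : x ∈ Submodule.span k {P, W}) :
    eval x F = 0 := by
  obtain ⟨a, b, rfl⟩ := Submodule.mem_span_pair.mp hx
  have hP (s : k) (hs : s ≠ 0) : aeval (s • P + b • W) F = 0 := by
    have hsb := congrArg (eval fun _ => s⁻¹ * b) h
    rw [eval_affinePullback, map_zero] at hsb
    have hs' : s • P + b • W = s • fun i => P i + ∑ _ : Unit, W i * (s⁻¹ * b) := by
      ext i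
      simp only [Pi.add_apply, Pi.smul_apply, smul_eq_mul, Fintype.sum_unique]
      field_simp
    rw [hs', aeval_smul_of_isHomogeneous hF, hsb, mul_zero]
  have hq : affinePullback F (a • P + b • W) (fun _ : Unit => P) * (X () + C a) = 0 :=
    MvPolynomial.funext fun t => by
      rw [map_mul, map_zero, mul_eq_zero, or_iff_not_imp_right]
      intro ht
      rw [eval_affinePullback, ← hP (t () + a) (by simpa using ht)]
      congr 2
      ext i
      simp only [Pi.add_apply, Pi.smul_apply, smul_eq_mul, Fintype.sum_unique,
        PUnit.default_eq_unit]
      ring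
  have hX : (X () + C a : MvPolynomial Unit k) ≠ 0 := fun h => by
    simpa using congrArg (pderiv ()) h
  rw [← aeval_eq_eval, ← constantCoeff_affinePullback F _ fun _ : Unit => P,
    (mul_eq_zero.mp hq).resolve_right hX, map_zero]

end Line

theorem exists_isHomogeneous_not_dvd_forall_eval_eq_zero {k σ : Type*} [Field k] [Finite σ] {d : ℕ}
    {F : MvPolynomial σ k} (hF : F.IsHomogeneous d) (hirr : Irreducible F) (hd : 2 ≤ d)
    {S : Set (Submodule k (σ → k))} (hS : S.Finite) (hS' : ∀ L ∈ S, L ≠ ⊤) :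
    ∃ (n : ℕ) (H : MvPolynomial σ k), H.IsHomogeneous n ∧ ¬ F ∣ H ∧
      ∀ L ∈ S, ∀ x ∈ L, eval x H = 0 := by
  classical
  cases nonempty_fintype σ
  have hform (L : Submodule k (σ → k)) (hL : L ≠ ⊤) : ∃ a ≠ 0, ∀ x ∈ L, a ⬝ᵥ x = 0 := by
    obtain ⟨f, hf0, hf⟩ := L.exists_le_ker_of_lt_top hL.lt_top
    refine ⟨(dotProductEquiv k σ).symm f, by simpa using hf0, fun x hx => ?_⟩
    exact (LinearMap.congr_fun ((dotProductEquiv k σ).apply_symm_apply f) x).trans (hf hx)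
  choose! a ha0 ha using hform
  refine ⟨_, ∏ L ∈ hS.toFinset, linForm (a L),
    IsHomogeneous.prod _ _ _ fun L _ => isHomogeneous_linForm (a L), ?_, fun L hL x hx => ?_⟩
  · rw [hirr.prime.dvd_finsetProd_iff]
    rintro ⟨L, hL, h⟩
    exact not_dvd_of_isHomogeneous_of_lt hF hirr.ne_zero (isHomogeneous_linForm (a L))
      ((linForm_eq_zero_iff _).not.mpr (ha0 L (hS' L (hS.mem_toFinset.mp hL)))) hd h
  · rw [eval_prod]
    refine Finset.prod_eq_zero (hS.mem_toFinset.mpr hL) ?_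
    rw [← aeval_eq_eval, aeval_linForm, ha L (hS' L hL) x hx]

section RestrictPoly

variable {k : Type*} [Field k] {m n : ℕ} (G : MvPolynomial (Fin m) k)
  (ψ : (Fin n → k) →ₗ[k] Fin m → k)

theorem eval_restrictPoly (x : Fin n → k) : eval x (restrictPoly G ψ) = eval (ψ x) G := by
  conv_rhs => rw [pi_eq_sum_univ' x]
  rw [restrictPoly, ← aeval_eq_eval, comp_aeval_apply, ← aeval_eq_eval]
  congr 2
  ext i
  simp [mul_comm]

theorem affinePullback_restrictPoly {τ : Type*} [Fintype τ] [Infinite k] (p : Fin n → k)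
    (a : τ → Fin n → k) :
    affinePullback (restrictPoly G ψ) p a = affinePullback G (ψ p) fun j => ψ (a j) := by
  refine MvPolynomial.funext fun t => ?_
  have hψ : (fun i => ψ p i + ∑ j, ψ (a j) i * t j) = ψ (fun i => p i + ∑ j, a j i * t j) := by
    have : (fun i => p i + ∑ j, a j i * t j) = p + ∑ j, t j • a j := by
      ext i
      simp [mul_comm]
    rw [this]
    ext i
    simp [mul_comm]
  rw [eval_affinePullback, eval_affinePullback, aeval_eq_eval, eval_restrictPoly, hψ, aeval_eq_eval]

end RestrictPoly

theorem affinePullback_single {R τ : Type*} [CommRing R] [Fintype τ] [DecidableEq τ]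
    (G : MvPolynomial τ R) (p : τ → R) :
    affinePullback G p (fun j => Pi.single j 1) = bind₁ (fun i => C (p i) + X i) G := by
  have h (i : τ) : linForm (fun j => Pi.single (M := fun _ => R) j 1 i) = X i := by
    simp [linForm, Pi.single_apply]
  simp only [affinePullback, h, bind₁]

theorem constantCoeff_pderiv_pderiv_affinePullback_eq_zero {R τ υ : Type*} [CommRing R] [Finite τ]
    [Fintype υ] {G : MvPolynomial τ R} {p : τ → R}
    (hG : homogeneousComponent 2 (bind₁ (fun i => C (p i) + X i) G) = 0) (a : υ → τ → R) (i j : υ) :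
    constantCoeff (pderiv i (pderiv j (affinePullback G p a))) = 0 := by
  classical
  cases nonempty_fintype τ
  have h (l m : τ) : aeval p (pderiv l (pderiv m G)) = 0 := by
    have h := congrArg constantCoeff (congrArg (pderiv l) (congrArg (pderiv m) hG))
    rw [pderiv_homogeneousComponent_succ, pderiv_homogeneousComponent_succ,
      homogeneousComponent_zero, constantCoeff_C, ← affinePullback_single, ← constantCoeff_eq,
      constantCoeff_pderiv_pderiv_affinePullback] at h
    simpa [Pi.single_apply] using h
  rw [constantCoeff_pderiv_pderiv_affinePullback]
  simp [h, dotProduct]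

theorem eval_pderiv_eq_zero_of_homogeneousComponent_one_eq_zero {R τ : Type*} [CommRing R]
    [Finite τ] {G : MvPolynomial τ R} {p : τ → R}
    (hG : homogeneousComponent 1 (bind₁ (fun i => C (p i) + X i) G) = 0) (i : τ) :
    eval p (pderiv i G) = 0 := by
  classical
  cases nonempty_fintype τ
  have h := congrArg constantCoeff (congrArg (pderiv i) hG)
  rw [pderiv_homogeneousComponent_succ, homogeneousComponent_zero, constantCoeff_C,
    ← affinePullback_single, ← constantCoeff_eq, constantCoeff_pderiv_affinePullback] at h
  simpa using h

namespace IsDoublePointTangentFrame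

variable {k τ : Type*} [Field k] [Fintype τ]

theorem ne_zero {σ : Type*} {F : MvPolynomial σ k} {d : ℕ} {P : σ → k} {V : τ → σ → k}
    (h : IsDoublePointTangentFrame F P V) (hF : F.IsHomogeneous d) (hd : 2 ≤ d) : P ≠ 0 := by
  rintro rfl
  obtain ⟨i, hi⟩ := h.exists_aeval_pderiv_ne_zero
  have h0 := aeval_smul_of_isHomogeneous (hF.pderiv (i := i)) (0 : k) 0
  rw [smul_zero, zero_pow (by omega), zero_mul] at h0
  exact hi h0

variable {n : ℕ} {F : MvPolynomial (Fin (n + 1)) k} {P : Fin (n + 1) → k} {V : τ → Fin (n + 1) → k}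
  (h : IsDoublePointTangentFrame F P V) {ψ : (Fin n → k) →ₗ[k] Fin (n + 1) → k}
  (hψ : Function.Injective ψ) {p : Fin n → k} (hp : ψ p = P)

include h hψ hp

theorem exists_affinePullback_restrictPoly_eq [Infinite k]
    (hsing : ∀ i, eval p (pderiv i (restrictPoly F ψ)) = 0) :
    ∃ a : τ → Fin n → k, affinePullback (restrictPoly F ψ) p a = affinePullback F P V := by
  subst hp
  set g : Fin (n + 1) → k := fun i => aeval (ψ p) (pderiv i F) with hg
  have hψg (v) : g ⬝ᵥ ψ v = 0 := by
    have := constantCoeff_pderiv_affinePullback (restrictPoly F ψ) p (fun _ : Unit => v) ()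
    rw [affinePullback_restrictPoly, constantCoeff_pderiv_affinePullback] at this
    simpa [hsing, dotProduct, hg] using this
  have hker : ψ.range = (dotProductEquiv k _ g).ker := by
    refine Submodule.eq_of_le_of_finrank_eq ?_ ?_
    · rintro _ ⟨v, rfl⟩
      exact hψg v
    · have hg0 : dotProductEquiv k _ g ≠ 0 := by
        obtain ⟨i, hi⟩ := h.exists_aeval_pderiv_ne_zero
        exact (LinearEquiv.map_ne_zero_iff _).mpr (Function.ne_iff.mpr ⟨i, hi⟩)
      have := Module.Dual.finrank_ker_add_one_of_ne_zero hg0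
      rw [LinearMap.finrank_range_of_inj hψ]
      simpa using this.symm
  have hV (j) : V j ∈ ψ.range := by
    rw [hker]
    exact (constantCoeff_pderiv_affinePullback F _ V j).symm.trans (h.singularAtOrigin.2 j)
  choose a ha using hV
  exact ⟨a, by rw [affinePullback_restrictPoly, funext ha]⟩

theorem exists_homogeneousComponent_ne_zero [Infinite k] :
    ∃ j ≤ 2, homogeneousComponent j (bind₁ (fun i => C (p i) + X i) (restrictPoly F ψ)) ≠ 0 := by
  by_contra! hzero
  obtain ⟨a, ha⟩ := h.exists_affinePullback_restrictPoly_eq hψ hp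
    (eval_pderiv_eq_zero_of_homogeneousComponent_one_eq_zero (hzero 1 one_le_two))
  obtain ⟨i, j, hij⟩ := h.exists_constantCoeff_pderiv_pderiv_ne_zero
  exact hij (ha ▸ constantCoeff_pderiv_pderiv_affinePullback_eq_zero (hzero 2 le_rfl) a i j)

theorem exists_eval_pderiv_ne_zero_of_dvd [Infinite k] {c : MvPolynomial (Fin n) k}
    (hc : c.totalDegree < F.totalDegree) (hcF : c ∣ restrictPoly F ψ) (hcp : eval p c = 0) :
    ∃ i, eval p (pderiv i c) ≠ 0 := by
  by_contra! hsing
  have hF (i) : eval p (pderiv i (restrictPoly F ψ)) = 0 := by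
    obtain ⟨g, hg⟩ := hcF
    simp [hg, hcp, hsing]
  obtain ⟨a, ha⟩ := h.exists_affinePullback_restrictPoly_eq hψ hp hF
  refine h.not_dvd (affinePullback c p a) ((totalDegree_affinePullback_le c p a).trans_lt hc)
    ⟨?_, fun i => ?_⟩ (ha ▸ map_dvd _ hcF)
  · rw [constantCoeff_affinePullback, aeval_eq_eval, hcp]
  · simp [constantCoeff_pderiv_affinePullback, hsing, dotProduct]

theorem exists_eval_ne_zero [Infinite k] : ∃ v, eval (ψ v) F ≠ 0 := by
  by_contra! hzero
  obtain ⟨j, -, hj⟩ := h.exists_homogeneousComponent_ne_zero hψ hp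
  have : restrictPoly F ψ = 0 := MvPolynomial.funext fun v => by
    rw [eval_restrictPoly, hzero, map_zero]
  exact hj (by rw [this, map_zero, map_zero])

end IsDoublePointTangentFrame

theorem exists_pderiv_ne_zero {k σ : Type*} [Field k] [CharZero k] [Finite σ] {d : ℕ}
    {F : MvPolynomial σ k} (hF : F.IsHomogeneous d) (hF0 : F ≠ 0) (hd : d ≠ 0) :
    ∃ i, pderiv i F ≠ 0 := by
  cases nonempty_fintype σ
  by_contra! h
  have heuler := hF.sum_X_mul_pderiv
  simp only [h, mul_zero, Finset.sum_const_zero] at heuler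
  exact smul_ne_zero hd hF0 heuler.symm

theorem finrank_span_pair_of_apply_eq {k σ : Type*} [Field k] {P w : σ → k} {j : σ} (hP : P j = 1)
    (hwj : w j = 0) (hw : w ≠ 0) : Module.finrank k (Submodule.span k {P, w}) = 2 := by
  have hli : LinearIndependent k ![P, w] := by
    rw [LinearIndependent.pair_iff]
    intro a b hab
    obtain rfl : a = 0 := by simpa [hP, hwj] using congrFun hab j
    simpa [hw] using hab
  have hrange := Matrix.range_cons_cons_empty P w ![]
  rw [← hrange, finrank_span_eq_card hli, Fintype.card_fin]

theorem exists_isDoublePointTangentFrame_of_finite_lines {k σ : Type*} [Field k] [IsAlgClosed k]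
    [CharZero k] [Fintype σ] (hσ : Fintype.card σ = 4) {d : ℕ} (hd : 2 ≤ d) {F : MvPolynomial σ k}
    (hF : F.IsHomogeneous d) (hirr : Irreducible F)
    (hlines : {L : Submodule k (σ → k) |
      Module.finrank k L = 2 ∧ ∀ x ∈ L, eval x F = 0}.Finite) :
    ∃ (P : σ → k) (V : Fin 2 → σ → k), IsDoublePointTangentFrame F P V ∧
      ∀ L : Submodule k (σ → k), Module.finrank k L = 2 → P ∈ L → ∃ x ∈ L, eval x F ≠ 0 := by
  obtain ⟨i, hi⟩ := exists_pderiv_ne_zero hF hirr.ne_zero (by omega)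
  let e : Option (Option (Fin 2)) ≃ σ :=
    (Fintype.equivOfCardEq (by simp [hσ])).setValue (some none) i
  have he : e (some none) = i := Equiv.setValue_eq _ _ _
  obtain ⟨n, H, hH, hFH, hHL⟩ := exists_isHomogeneous_not_dvd_forall_eval_eq_zero hF hirr hd hlines
    (by
      rintro L ⟨hL, -⟩ rfl
      simp [hσ] at hL)
  obtain ⟨P, V, hHP, h⟩ := exists_isDoublePointTangentFrame (e := e) hirr hF hd (he ▸ hi) hH hFH
    fun Q w hQ hwj hw hline =>
      hHL _ ⟨finrank_span_pair_of_apply_eq hQ hwj hw,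
        fun x hx => eval_eq_zero_of_mem_span_pair hF hline hx⟩ Q
        (Submodule.subset_span (Set.mem_insert _ _))
  refine ⟨P, V, h, fun L hL hPL => ?_⟩
  by_contra! hL0
  exact hHP (hHL L ⟨hL, hL0⟩ P hPL)

theorem stmt_18_general (k : Type*) [Field k] [IsAlgClosed k] [CharZero k] (d : ℕ) (hd : 2 ≤ d)
    (F : MvPolynomial (Fin 4) k) (hhom : F.IsHomogeneous d) (hirr : Irreducible F)
    (hlines : {L : Submodule k (Fin 4 → k) |
      Module.finrank k L = 2 ∧ ∀ x ∈ L, eval x F = 0}.Finite) :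
    ∃ P : Fin 4 → k, P ≠ 0 ∧ eval P F = 0 ∧
      (∃ i, eval P (pderiv i F) ≠ 0) ∧
      (¬ ∃ Pl : Submodule k (Fin 4 → k), Module.finrank k Pl = 3 ∧ P ∈ Pl ∧
        ∀ x ∈ Pl, eval x F = 0) ∧
      (∀ Pl : Submodule k (Fin 4 → k), Module.finrank k Pl = 3 → ∀ hP : P ∈ Pl,
        ∀ φ : (Fin 3 → k) ≃ₗ[k] Pl,
          ∃ j ≤ 2, homogeneousComponent j
            (bind₁ (fun i => C ((φ.symm ⟨P, hP⟩ : Fin 3 → k) i) + X i)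
              (restrictPoly F (Pl.subtype.comp φ.toLinearMap))) ≠ 0) ∧
      (¬ ∃ L : Submodule k (Fin 4 → k), Module.finrank k L = 2 ∧ P ∈ L ∧
        ∀ x ∈ L, eval x F = 0) ∧
      (∀ Pl : Submodule k (Fin 4 → k), Module.finrank k Pl = 3 → ∀ hP : P ∈ Pl,
        ∀ φ : (Fin 3 → k) ≃ₗ[k] Pl, ∀ c : MvPolynomial (Fin 3) k,
          c.totalDegree < d → c ∣ restrictPoly F (Pl.subtype.comp φ.toLinearMap) →
          eval (φ.symm ⟨P, hP⟩ : Fin 3 → k) c = 0 →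
          ∃ i, eval (φ.symm ⟨P, hP⟩ : Fin 3 → k) (pderiv i c) ≠ 0) := by
  obtain ⟨P, V, h, hline⟩ :=
    exists_isDoublePointTangentFrame_of_finite_lines (Fintype.card_fin 4) hd hhom hirr hlines
  have hinj (Pl : Submodule k (Fin 4 → k)) (φ : (Fin 3 → k) ≃ₗ[k] Pl) :
      Function.Injective (Pl.subtype.comp φ.toLinearMap) :=
    Subtype.val_injective.comp φ.injective
  have happly {Pl : Submodule k (Fin 4 → k)} (hP : P ∈ Pl) (φ : (Fin 3 → k) ≃ₗ[k] Pl) :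
      Pl.subtype.comp φ.toLinearMap (φ.symm ⟨P, hP⟩) = P := by simp
  have hPF : eval P F = 0 := (constantCoeff_affinePullback F P V).symm.trans h.singularAtOrigin.1
  refine ⟨P, h.ne_zero hhom hd, hPF, h.exists_aeval_pderiv_ne_zero, ?_, ?_, ?_, ?_⟩
  · rintro ⟨Pl, hPl, hP, hF⟩
    let φ : (Fin 3 → k) ≃ₗ[k] Pl := LinearEquiv.ofFinrankEq _ _ (by simp [hPl])
    obtain ⟨v, hv⟩ := h.exists_eval_ne_zero (hinj Pl φ) (happly hP φ)
    exact hv (hF _ (φ v).2)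
  · exact fun Pl _ hP φ => h.exists_homogeneousComponent_ne_zero (hinj Pl φ) (happly hP φ)
  · rintro ⟨L, hL, hP, hF⟩
    obtain ⟨x, hx, hxF⟩ := hline L hL hP
    exact hxF (hF x hx)
  · exact fun Pl _ hP φ c hc => h.exists_eval_pderiv_ne_zero_of_dvd (hinj Pl φ) (happly hP φ)
      (hc.trans_eq (hhom.totalDegree hirr.ne_zero).symm)

/-- Lemma 5.5 of Salberger (case `d ≥ 4`, conditions (%₁)–(%₄) of Definition 5.2): an
integral surface `X = {F = 0} ⊂ P^3` of degree `d ≥ 4` over an algebraically closed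
field of characteristic `0` containing only finitely many lines has a closed point `P`
such that: (1) `P` is non-singular; (2) `P` lies on no plane contained in `X` and has
multiplicity at most two on every plane section of `X`; (3) `P` lies on no line on `X`;
(4) `P` is a non-singular point of every plane cubic contained in `X` through `P`. -/
theorem stmt_18 (k : Type*) [Field k] [IsAlgClosed k] [CharZero k] (d : ℕ) (hd : 4 ≤ d)
    (F : MvPolynomial (Fin 4) k) (hhom : F.IsHomogeneous d) (hirr : Irreducible F)
    (hlines : {L : Submodule k (Fin 4 → k) |
      Module.finrank k L = 2 ∧ ∀ x ∈ L, eval x F = 0}.Finite) :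
    ∃ P : Fin 4 → k, P ≠ 0 ∧ eval P F = 0 ∧
      (∃ i, eval P (pderiv i F) ≠ 0) ∧
      (¬ ∃ Pl : Submodule k (Fin 4 → k), Module.finrank k Pl = 3 ∧ P ∈ Pl ∧
        ∀ x ∈ Pl, eval x F = 0) ∧
      (∀ Pl : Submodule k (Fin 4 → k), Module.finrank k Pl = 3 → ∀ hP : P ∈ Pl,
        ∀ φ : (Fin 3 → k) ≃ₗ[k] Pl,
          ∃ j ≤ 2, homogeneousComponent j
            (bind₁ (fun i => C ((φ.symm ⟨P, hP⟩ : Fin 3 → k) i) + X i)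
              (restrictPoly F (Pl.subtype.comp φ.toLinearMap))) ≠ 0) ∧
      (¬ ∃ L : Submodule k (Fin 4 → k), Module.finrank k L = 2 ∧ P ∈ L ∧
        ∀ x ∈ L, eval x F = 0) ∧
      (∀ Pl : Submodule k (Fin 4 → k), Module.finrank k Pl = 3 → ∀ hP : P ∈ Pl,
        ∀ φ : (Fin 3 → k) ≃ₗ[k] Pl, ∀ c : MvPolynomial (Fin 3) k,
          c.IsHomogeneous 3 → c ∣ restrictPoly F (Pl.subtype.comp φ.toLinearMap) →
          eval (φ.symm ⟨P, hP⟩ : Fin 3 → k) c = 0 →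
          ∃ i, eval (φ.symm ⟨P, hP⟩ : Fin 3 → k) (pderiv i c) ≠ 0) := by
  obtain ⟨P, hP0, hPF, h1, h2, h2', h3, h4⟩ :=
    stmt_18_general k d (by omega) F hhom hirr hlines
  exact ⟨P, hP0, hPF, h1, h2, h2', h3, fun Pl hPl hP φ c hc =>
    h4 Pl hPl hP φ c (hc.totalDegree_le.trans_lt (by omega))⟩
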